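/- arXiv:2301.04462 — 2 statements merged into one kernel-verified Lean document; each statement's English description precedes it below -/
import Mathlib

section
/- Stochastic approximation of a differential inclusion with a Lyapunov function: let H : ℝ^n → Set(ℝ^n) be a Marchaud map, and suppose there exists a Lyapunov function L for the differential inclusion ∂_t z_t ∈ H(z_t) and a subset Λ ⊆ ℝ^n. Let (θ_k)_{k≥0} satisfy θ_{k+1} = θ_k + α_k(g_k + w_k), where the nonnegative step sizes satisfy Σ_k α_k = ∞ and α_k = o(1/log k), g_k ∈ H(θ_k) for all k, and (w_k)_{k≥0} is a martingale difference sequence with respect to the natural filtration generated by (θ_k): there exists a constant C with ‖w_k‖_∞ < C almost surely and E[w_k | θ_0,…,θ_k] = 0. If in addition sup_{k≥0} ‖θ_k‖_∞ < ∞ almost surely, then θ_k converges to Λ almost surely (i.e., dist(θ_k, Λ) → 0 with probability 1). -/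
open MeasureTheory Set
open scoped ENNReal

/-- A set-valued map `H : ℝ^n → Set (ℝ^n)` is a Marchaud map: closed graph; nonempty compact
convex values; linear growth. -/
def IsMarchaud {n : ℕ} (H : (Fin n → ℝ) → Set (Fin n → ℝ)) : Prop :=
  IsClosed {p : (Fin n → ℝ) × (Fin n → ℝ) | p.2 ∈ H p.1}
  ∧ (∀ z, (H z).Nonempty ∧ IsCompact (H z) ∧ Convex ℝ (H z))
  ∧ ∃ C : ℝ, 0 < C ∧ ∀ z, ∀ h ∈ H z, ‖h‖ ≤ C * (1 + ‖z‖)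

/-- A solution of the differential inclusion `∂_t z_t ∈ H(z_t)` on `[0,∞)`: there is a locally
integrable `g` with `z_t = z_0 + ∫_0^t g_s ds` for all `t ≥ 0` and `g_s ∈ H(z_s)` for almost
all `s ≥ 0`. -/
def IsDISolution {n : ℕ} (H : (Fin n → ℝ) → Set (Fin n → ℝ)) (z : ℝ → Fin n → ℝ) : Prop :=
  ∃ g : ℝ → Fin n → ℝ,
    (∀ t : ℝ, 0 ≤ t → IntegrableOn g (Set.Icc 0 t))
    ∧ (∀ t : ℝ, 0 ≤ t → z t = z 0 + ∫ s in Set.Ioc (0:ℝ) t, g s)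
    ∧ (∀ᵐ s ∂(volume.restrict (Set.Ici (0:ℝ))), g s ∈ H (z s))

/-- `L` is a Lyapunov function for the differential inclusion `∂_t z_t ∈ H(z_t)` and the set
`Λ`: continuous, nonnegative, vanishing on `Λ`, and strictly decreasing along every solution
while outside `Λ`. -/
def IsLyapunovFn {n : ℕ} (H : (Fin n → ℝ) → Set (Fin n → ℝ)) (Λ : Set (Fin n → ℝ))
    (L : (Fin n → ℝ) → ℝ) : Prop :=
  Continuous L ∧ (∀ z, 0 ≤ L z) ∧ (∀ z ∈ Λ, L z = 0)
  ∧ ∀ z : ℝ → Fin n → ℝ, IsDISolution H z →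
      ∀ s t : ℝ, 0 ≤ s → s < t → z s ∉ Λ → L (z t) < L (z s)

open Filter Topology

/-- A Marchaud map is upper semicontinuous: near `z` its values stay in any prescribed
thickening of `H z`. -/
lemma IsMarchaud.eventually_subset_cthickening {n : ℕ} {H : (Fin n → ℝ) → Set (Fin n → ℝ)}
    (hH : IsMarchaud H) (z : Fin n → ℝ) {ε : ℝ} (hε : 0 < ε) :
    ∃ δ > 0, ∀ y, dist y z < δ → H y ⊆ Metric.cthickening ε (H z) := by
  obtain ⟨hgraph, -, C, hC, hgrowth⟩ := hH
  by_contra! hcon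
  have hpos : ∀ m : ℕ, (0 : ℝ) < 1 / ((m : ℝ) + 1) := fun m => by positivity
  choose y hy hsub using fun m : ℕ => hcon _ (hpos m)
  choose h hmem hout using fun m => Set.not_subset.1 (hsub m)
  have hlim : Tendsto y atTop (𝓝 z) :=
    tendsto_iff_dist_tendsto_zero.2 <|
      squeeze_zero (fun _ => dist_nonneg) (fun m => (hy m).le)
        tendsto_one_div_add_atTop_nhds_zero_nat
  have hnorm : ∀ m, h m ∈ Metric.closedBall (0 : Fin n → ℝ) (C * (1 + (‖z‖ + 1))) := fun m => by
    rw [mem_closedBall_zero_iff]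
    refine (hgrowth _ _ (hmem m)).trans ?_
    have h1 : dist (y m) z < 1 := (hy m).trans_le <| by
      rw [div_le_one (by positivity)]; linarith [(Nat.cast_nonneg m : (0 : ℝ) ≤ m)]
    have h2 : ‖y m‖ ≤ ‖z‖ + 1 := by
      have := norm_le_norm_add_norm_sub' (y m) z
      rw [dist_eq_norm] at h1
      linarith
    gcongr
  obtain ⟨a, -, φ, hφ, ha⟩ := tendsto_subseq_of_bounded Metric.isBounded_closedBall hnorm
  have haH : a ∈ H z :=
    hgraph.mem_of_tendsto ((hlim.comp hφ.tendsto_atTop).prodMk_nhds ha)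
      (Eventually.of_forall fun m => hmem (φ m))
  obtain ⟨m, hm⟩ := (Metric.tendsto_nhds.1 ha ε hε).exists
  exact hout (φ m) (Metric.mem_cthickening_of_dist_le _ a _ _ haH hm.le)

/-- A Lipschitz path whose derivative, wherever it exists, lies in `H` along the path solves the
differential inclusion. -/
lemma IsDISolution.of_lipschitzWith {n : ℕ} {H : (Fin n → ℝ) → Set (Fin n → ℝ)}
    {z : ℝ → Fin n → ℝ} {K : NNReal} (hz : LipschitzWith K z)
    (hderiv : ∀ t v, HasDerivAt z v t → v ∈ H (z t)) : IsDISolution H z := by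
  have hint : ∀ t : ℝ, IntegrableOn (deriv z) (Set.Icc 0 t) := fun t =>
    Measure.integrableOn_of_bounded (M := K) (by simp) (measurable_deriv z).aestronglyMeasurable
      (Eventually.of_forall fun s => norm_deriv_le_of_lipschitz hz)
  refine ⟨deriv z, fun t _ => hint t, fun t ht => ?_, ?_⟩
  · ext i
    have hlip : LipschitzWith K fun s => z s i := by
      simpa [Function.comp_def] using (LipschitzWith.eval i).comp hz
    have hftc := (hlip.lipschitzOnWith (s := Set.uIcc 0 t)).absolutelyContinuousOnInterval
      |>.integral_deriv_eq_sub
    rw [intervalIntegral.integral_of_le ht] at hftc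
    have hae : ∀ᵐ s ∂(volume.restrict (Set.Ioc 0 t)), deriv (fun s => z s i) s = deriv z s i := by
      refine ae_restrict_of_ae ?_
      filter_upwards [hz.ae_differentiableAt_real] with s hs
      exact (hasDerivAt_pi.1 hs.hasDerivAt i).deriv
    rw [integral_congr_ae hae] at hftc
    have hcoord : (∫ s in Set.Ioc 0 t, deriv z s) i = ∫ s in Set.Ioc 0 t, deriv z s i :=
      eval_integral (fun j =>
        ((hint t).mono_set Set.Ioc_subset_Icc_self).eval j) i
    rw [Pi.add_apply, hcoord, hftc]
    ring
  · refine ae_restrict_of_ae ?_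
    filter_upwards [hz.ae_differentiableAt_real] with s hs
    exact hderiv s _ hs.hasDerivAt

/-- A Lyapunov function which does not decrease over `[0, t]` along a solution vanishes at the
endpoint. -/
lemma IsLyapunovFn.eq_zero_of_le {n : ℕ} {H : (Fin n → ℝ) → Set (Fin n → ℝ)}
    {Λ : Set (Fin n → ℝ)} {L : (Fin n → ℝ) → ℝ} (hL : IsLyapunovFn H Λ L)
    {z : ℝ → Fin n → ℝ} (hz : IsDISolution H z) (hzc : Continuous z) {t : ℝ} (ht : 0 < t)
    (hle : L (z 0) ≤ L (z t)) : L (z t) = 0 := by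
  obtain ⟨hcont, hnonneg, hzero, hdec⟩ := hL
  have h0 : z 0 ∈ Λ := by
    by_contra h
    exact (hdec z hz 0 t le_rfl ht h).not_ge hle
  set S : Set ℝ := {s | s ∈ Set.Icc 0 t ∧ L (z s) = 0} with hS
  have hLz : Continuous fun s => L (z s) := hcont.comp hzc
  have hScompact : IsCompact S :=
    isCompact_Icc.inter_right (isClosed_eq hLz continuous_const)
  obtain ⟨r, ⟨hr, hr0⟩, hmax⟩ := hScompact.exists_isGreatest ⟨0, ⟨le_rfl, ht.le⟩, hzero _ h0⟩
  rcases hr.2.eq_or_lt with rfl | hrt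
  · exact hr0
  refine le_antisymm ?_ (hnonneg _)
  rw [← hr0]
  refine ge_of_tendsto (hLz.continuousAt.tendsto.mono_left (nhdsWithin_le_nhds (s := Set.Ioi r))) ?_
  filter_upwards [Ioo_mem_nhdsGT hrt] with s hs
  have hs0 : 0 ≤ s := hr.1.trans hs.1.le
  refine (hdec z hz s t hs0 hs.2 fun hmem => ?_).le
  exact (hmax ⟨⟨hs0, hs.2.le⟩, hzero _ hmem⟩).not_gt hs.1

/-- The time elapsed after the first `k` steps of sizes `α`. -/
def stepTime (α : ℕ → ℝ) (k : ℕ) : ℝ := ∑ i ∈ Finset.range k, α i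

lemma stepTime_succ (α : ℕ → ℝ) (k : ℕ) : stepTime α (k + 1) = stepTime α k + α k :=
  Finset.sum_range_succ _ _

lemma sum_Ico_eq_stepTime_sub (α : ℕ → ℝ) {k m : ℕ} (h : k ≤ m) :
    ∑ i ∈ Finset.Ico k m, α i = stepTime α m - stepTime α k :=
  Finset.sum_Ico_eq_sub _ h

lemma stepTime_mono {α : ℕ → ℝ} (hα : ∀ k, 0 ≤ α k) : Monotone (stepTime α) :=
  monotone_nat_of_le_succ fun k => by rw [stepTime_succ]; linarith [hα k]

/-- `w` is asymptotically negligible: its weighted partial sums over windows of bounded elapsed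
time tend to zero uniformly (the Kushner–Clark condition). -/
def IsNegligibleNoise {E : Type*} [NormedAddCommGroup E] [NormedSpace ℝ E] (α : ℕ → ℝ)
    (w : ℕ → E) : Prop :=
  ∀ T ε : ℝ, 0 < ε → ∀ᶠ k in atTop, ∀ m, k ≤ m → stepTime α m - stepTime α k ≤ T →
    ‖∑ i ∈ Finset.Ico k m, α i • w i‖ ≤ ε

/-- A bounded perturbed Euler scheme for the differential inclusion `∂_t z_t ∈ H(z_t)` with step
sizes `α` and noise `w`. -/
structure IsPerturbedEuler {n : ℕ} (H : (Fin n → ℝ) → Set (Fin n → ℝ)) (α : ℕ → ℝ)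
    (x g w : ℕ → Fin n → ℝ) : Prop where
  step_nonneg : ∀ k, 0 ≤ α k
  step_tendsto : Tendsto α atTop (𝓝 0)
  time_tendsto : Tendsto (stepTime α) atTop atTop
  update : ∀ k, x (k + 1) = x k + α k • (g k + w k)
  drift_mem : ∀ k, g k ∈ H (x k)
  bounded : ∃ B : ℝ, ∀ k, ‖x k‖ ≤ B
  noise : IsNegligibleNoise α w

/-- The index of the step in progress at time `s ≥ 0`. -/
lemma exists_stepIndex {α : ℕ → ℝ} (hτ : Tendsto (stepTime α) atTop atTop) :
    ∃ N : ℝ → ℕ, ∀ s, 0 ≤ s → stepTime α (N s) ≤ s ∧ s < stepTime α (N s + 1) := by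
  classical
  have hex : ∀ s : ℝ, ∃ k, s < stepTime α (k + 1) := fun s =>
    ((tendsto_add_atTop_iff_nat 1).2 hτ |>.eventually_gt_atTop s).exists
  refine ⟨fun s => Nat.find (hex s), fun s hs => ⟨?_, Nat.find_spec (hex s)⟩⟩
  rcases Nat.eq_zero_or_pos (Nat.find (hex s)) with h | h
  · change stepTime α (Nat.find (hex s)) ≤ s
    rw [h]
    simpa [stepTime] using hs
  · have := Nat.find_min (hex s) (m := Nat.find (hex s) - 1) (by omega)
    rw [Nat.sub_add_cancel h] at this
    exact not_lt.1 this

namespace IsPerturbedEuler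

variable {n : ℕ} {H : (Fin n → ℝ) → Set (Fin n → ℝ)} {α : ℕ → ℝ} {x g w : ℕ → Fin n → ℝ}

lemma sub_eq_sum (hx : IsPerturbedEuler H α x g w) {k m : ℕ} (h : k ≤ m) :
    x m - x k = ∑ i ∈ Finset.Ico k m, α i • g i + ∑ i ∈ Finset.Ico k m, α i • w i := by
  rw [← Finset.sum_add_distrib, ← Finset.sum_Ico_sub x h]
  refine Finset.sum_congr rfl fun i _ => ?_
  rw [hx.update i, add_sub_cancel_left, smul_add]

lemma exists_norm_drift_le (hH : IsMarchaud H) (hx : IsPerturbedEuler H α x g w) :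
    ∃ M : NNReal, ∀ k, ‖g k‖ ≤ M := by
  obtain ⟨-, -, C, hC, hgrowth⟩ := hH
  obtain ⟨B, hB⟩ := hx.bounded
  refine ⟨(C * (1 + B)).toNNReal, fun k => (hgrowth _ _ (hx.drift_mem k)).trans ?_⟩
  refine le_trans ?_ (Real.le_coe_toNNReal _)
  gcongr
  exact hB k

lemma norm_sum_drift_le (hx : IsPerturbedEuler H α x g w) {M : ℝ} (hM : ∀ k, ‖g k‖ ≤ M)
    {k m : ℕ} (h : k ≤ m) :
    ‖∑ i ∈ Finset.Ico k m, α i • g i‖ ≤ M * (stepTime α m - stepTime α k) := by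
  rw [← sum_Ico_eq_stepTime_sub α h, Finset.mul_sum]
  refine norm_sum_le_of_le _ fun i _ => ?_
  rw [norm_smul, Real.norm_of_nonneg (hx.step_nonneg i), mul_comm]
  exact mul_le_mul_of_nonneg_right (hM i) (hx.step_nonneg i)

lemma eventually_norm_sub_le (hx : IsPerturbedEuler H α x g w) {M : ℝ} (hM : ∀ k, ‖g k‖ ≤ M)
    (T : ℝ) {ε : ℝ} (hε : 0 < ε) :
    ∀ᶠ k in atTop, ∀ m, k ≤ m → stepTime α m - stepTime α k ≤ T →
      ‖x m - x k‖ ≤ M * (stepTime α m - stepTime α k) + ε := by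
  filter_upwards [hx.noise T ε hε] with k hk m hkm hT
  rw [hx.sub_eq_sum hkm]
  exact (norm_add_le _ _).trans (add_le_add (hx.norm_sum_drift_le hM hkm) (hk m hkm hT))

/-- Through every cluster point of a bounded perturbed Euler scheme passes, at time one, a
solution of the differential inclusion that starts at a cluster point. -/
theorem exists_solution (hH : IsMarchaud H) (hx : IsPerturbedEuler H α x g w)
    {a : Fin n → ℝ} (ha : MapClusterPt a atTop x) :
    ∃ z : ℝ → Fin n → ℝ, Continuous z ∧ IsDISolution H z ∧ z 1 = a ∧
      MapClusterPt (z 0) atTop x := by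
  obtain ⟨U, hU, hUa⟩ := mapClusterPt_iff_ultrafilter.1 ha
  obtain ⟨M, hM⟩ := hx.exists_norm_drift_le hH
  obtain ⟨N, hN⟩ := exists_stepIndex hx.time_tendsto
  have hmono := stepTime_mono hx.step_nonneg
  set τ := stepTime α with hτ
  have hτU : Tendsto τ U atTop := hx.time_tendsto.mono_left hU
  have hNmono : ∀ s s', 0 ≤ s → s ≤ s' → N s ≤ N s' := fun s s' hs hss => by
    by_contra! hlt
    have h1 := hmono (Nat.succ_le_of_lt hlt)
    have h2 := (hN s hs).1
    have h3 := (hN s' (hs.trans hss)).2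
    exact absurd (h3.trans_le (h1.trans h2)) hss.not_gt
  have hNtop : Tendsto N atTop atTop := by
    refine tendsto_atTop.2 fun k => ?_
    filter_upwards [eventually_ge_atTop (max 0 (τ k))] with s hs
    by_contra! hlt
    have h1 := hmono (Nat.succ_le_of_lt hlt)
    have h2 := (hN s ((le_max_left _ _).trans hs)).2
    exact absurd (h2.trans_le h1) ((le_max_right _ _).trans hs).not_gt
  -- `p k t` is the index reached `t - 1` units of time after step `k`
  set p : ℕ → ℝ → ℕ := fun k t => N (τ k - 1 + t) with hp
  have hstart : ∀ t, Tendsto (fun k => τ k - 1 + t) U atTop := fun t => by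
    simpa only [sub_add_eq_add_sub, add_sub_assoc] using
      tendsto_atTop_add_const_right (U : Filter ℕ) (t - 1) hτU
  have hptop : ∀ t, Tendsto (fun k => p k t) U atTop := fun t => hNtop.comp (hstart t)
  have hptime : ∀ t, Tendsto (fun k => τ (p k t) - (τ k - 1 + t)) U (𝓝 0) := fun t => by
    have hlow : Tendsto (fun k => -α (p k t)) U (𝓝 0) := by
      simpa using (hx.step_tendsto.comp (hptop t)).neg
    refine tendsto_of_tendsto_of_tendsto_of_le_of_le' hlow tendsto_const_nhds ?_ ?_
    all_goals
      filter_upwards [(hstart t).eventually_ge_atTop 0] with k hk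
      have := hN _ hk
      rw [hτ, stepTime_succ] at this
      simp only [hp, hτ] at *
      linarith
  have hpmono : ∀ t t', t ≤ t' → ∀ᶠ k in (U : Filter ℕ), p k t ≤ p k t' := fun t t' htt => by
    filter_upwards [(hstart t).eventually_ge_atTop 0] with k hk
    exact hNmono _ _ hk (by linarith)
  have hpdiff : ∀ t t', Tendsto (fun k => τ (p k t') - τ (p k t)) U (𝓝 (t' - t)) :=
    fun t t' => by
      have h := ((hptime t').sub (hptime t)).add_const (t' - t)
      simp only [sub_self, zero_add] at h
      exact h.congr fun k => by ring
  have hlimit : ∀ t, ∃ b, Tendsto (fun k => x (p k t)) U (𝓝 b) := fun t => by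
    obtain ⟨B, hB⟩ := hx.bounded
    obtain ⟨b, -, hb⟩ := (isCompact_closedBall (0 : Fin n → ℝ) B).ultrafilter_le_nhds
      (U.map fun k => x (p k t)) (by
        rw [le_principal_iff]
        exact Eventually.of_forall (f := (U : Filter ℕ)) fun k => by simpa using hB (p k t))
    exact ⟨b, hb⟩
  choose z hz using hlimit
  have hclose : ∀ t t' : ℝ, ∀ ε > 0, ∀ᶠ k in (U : Filter ℕ), ∀ m, p k t ≤ m → m ≤ p k t' →
      ‖x m - x (p k t)‖ ≤ M * (t' - t + ε) + ε := fun t t' ε hε => by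
    filter_upwards [(hptop t).eventually (hx.eventually_norm_sub_le hM (t' - t + ε) hε),
      (hpdiff t t').eventually_le_const (show t' - t < t' - t + ε by linarith)]
      with k hk hd m h1 h2
    have h3 : τ m - τ (p k t) ≤ t' - t + ε := (sub_le_sub_right (hmono h2) _).trans hd
    refine (hk m h1 h3).trans ?_
    gcongr
  have hlip' : ∀ t t', t ≤ t' → ‖z t' - z t‖ ≤ M * (t' - t) := fun t t' htt => by
    have hlim : Tendsto (fun ε : ℝ => M * (t' - t + ε) + ε) (𝓝[>] 0) (𝓝 (M * (t' - t))) := by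
      have : Continuous fun ε : ℝ => M * (t' - t + ε) + ε := by fun_prop
      simpa using (this.tendsto 0).mono_left nhdsWithin_le_nhds
    refine ge_of_tendsto hlim ?_
    filter_upwards [self_mem_nhdsWithin] with ε hε
    refine le_of_tendsto ((hz t').sub (hz t)).norm ?_
    filter_upwards [hclose t t' ε hε, hpmono t t' htt] with k hk hle
    exact hk _ hle le_rfl
  have hlip : LipschitzWith M z := LipschitzWith.of_dist_le_mul fun t t' => by
    rcases le_total t t' with h | h
    · rw [dist_comm, dist_eq_norm, dist_comm, Real.dist_eq, abs_of_nonneg (by linarith)]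
      exact hlip' t t' h
    · rw [dist_eq_norm, Real.dist_eq, abs_of_nonneg (by linarith)]
      exact hlip' t' t h
  have hnoise : ∀ t t', t ≤ t' →
      Tendsto (fun k => ∑ i ∈ Finset.Ico (p k t) (p k t'), α i • w i) U (𝓝 0) :=
    fun t t' htt => by
      refine Metric.tendsto_nhds.2 fun ε hε => ?_
      filter_upwards [(hptop t).eventually (hx.noise (t' - t + 1) (ε / 2) (half_pos hε)),
        (hpdiff t t').eventually_le_const (show t' - t < t' - t + 1 by linarith),
        hpmono t t' htt] with k hk hd hle
      rw [dist_zero_right]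
      exact (hk _ hle hd).trans_lt (half_lt_self hε)
  have hslope : ∀ t, ∀ ε > 0, ∀ᶠ h in 𝓝[>] (0 : ℝ),
      h⁻¹ • (z (t + h) - z t) ∈ Metric.cthickening ε (H (z t)) := fun t ε hε => by
    obtain ⟨δ, hδ, hsub⟩ := hH.eventually_subset_cthickening (z t) hε
    have hsmall : Tendsto (fun h : ℝ => M * (h + h) + h) (𝓝[>] 0) (𝓝 0) := by
      have : Continuous fun h : ℝ => M * (h + h) + h := by fun_prop
      simpa using (this.tendsto 0).mono_left nhdsWithin_le_nhds
    filter_upwards [self_mem_nhdsWithin, hsmall.eventually_lt_const (half_pos hδ)] with h hh hhδ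
    have hh' : 0 < h := hh
    have hpos : ∀ᶠ k in (U : Filter ℕ), 0 < τ (p k (t + h)) - τ (p k t) :=
      (hpdiff t (t + h)).eventually_const_lt (by linarith)
    have hle := hpmono t (t + h) (by linarith)
    have hdrift : Tendsto (fun k => ∑ i ∈ Finset.Ico (p k t) (p k (t + h)), α i • g i) U
        (𝓝 (z (t + h) - z t)) := by
      have h1 := ((hz (t + h)).sub (hz t)).sub (hnoise t (t + h) (by linarith))
      rw [sub_zero] at h1
      refine h1.congr' ?_
      filter_upwards [hle] with k hk
      rw [hx.sub_eq_sum hk, add_sub_cancel_right]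
    have havg := ((hpdiff t (t + h)).inv₀ (by simpa using hh'.ne')).smul hdrift
    rw [add_sub_cancel_left] at havg
    refine Metric.isClosed_cthickening.mem_of_tendsto havg ?_
    filter_upwards [hpos, hle, hclose t (t + h) h hh,
      Metric.tendsto_nhds.1 (hz t) (δ / 2) (half_pos hδ)] with k hk hlek hcl hnear
    have hmem : ∀ i ∈ Finset.Ico (p k t) (p k (t + h)), g i ∈ Metric.cthickening ε (H (z t)) :=
      fun i hi => by
        rw [Finset.mem_Ico] at hi
        refine hsub (x i) ?_ (hx.drift_mem i)
        have h1 := hcl i hi.1 hi.2.le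
        rw [← dist_eq_norm, add_sub_cancel_left] at h1
        linarith [dist_triangle (x i) (x (p k t)) (z t)]
    have hsum := sum_Ico_eq_stepTime_sub α hlek
    have := ((hH.2.1 (z t)).2.2.cthickening ε).centerMass_mem
      (t := Finset.Ico (p k t) (p k (t + h))) (w := α) (fun i _ => hx.step_nonneg i)
      (by rw [hsum]; exact hk) hmem
    rwa [Finset.centerMass, hsum] at this
  have hderiv : ∀ t v, HasDerivAt z v t → v ∈ H (z t) := fun t v hv => by
    have hclosed : IsClosed (H (z t)) := (hH.2.1 (z t)).2.1.isClosed
    rw [← hclosed.closure_eq, Metric.closure_eq_iInter_cthickening, Set.mem_iInter₂]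
    intro ε hε
    refine Metric.isClosed_cthickening.mem_of_tendsto ?_ (hslope t ε hε)
    exact (hasDerivAt_iff_tendsto_slope_zero.1 hv).mono_left
      (nhdsWithin_mono _ fun s hs => (ne_of_gt hs : s ≠ 0))
  refine ⟨z, hlip.continuous, IsDISolution.of_lipschitzWith hlip hderiv, ?_, ?_⟩
  · refine tendsto_nhds_unique (hz 1) ?_
    have hsub : Tendsto (fun k => x (p k 1) - x k) U (𝓝 0) := by
      refine Metric.tendsto_nhds.2 fun ε hε => ?_
      filter_upwards [hU (hx.eventually_norm_sub_le hM 0 (half_pos hε)),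
        hτU.eventually_ge_atTop 0] with k hk hk0
      have hp1 : p k 1 = N (τ k) := by simp [hp]
      have hN1 := hN _ hk0
      have hle : k ≤ p k 1 := by
        by_contra! hlt
        rw [hp1] at hlt
        exact absurd hN1.2 (hmono (Nat.succ_le_of_lt hlt)).not_gt
      have htime : τ (p k 1) - τ k = 0 :=
        le_antisymm (by rw [hp1]; linarith [hN1.1]) (sub_nonneg.2 (hmono hle))
      have := hk _ hle htime.le
      rw [← hτ, htime, mul_zero, zero_add] at this
      rw [dist_zero_right]
      exact this.trans_lt (half_lt_self hε)
    simpa using hsub.add hUa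
  · exact mapClusterPt_iff_ultrafilter.2
      ⟨U.map fun k => p k 0, hptop 0, by simpa [Function.comp_def, Tendsto] using hz 0⟩

/-- A bounded perturbed Euler scheme converges to the set of a Lyapunov function. -/
theorem tendsto_infDist (hH : IsMarchaud H) (hx : IsPerturbedEuler H α x g w)
    {Λ : Set (Fin n → ℝ)} {L : (Fin n → ℝ) → ℝ} (hL : IsLyapunovFn H Λ L) :
    Tendsto (fun k => Metric.infDist (x k) Λ) atTop (𝓝 0) := by
  obtain ⟨B, hB⟩ := hx.bounded
  set A : Set (Fin n → ℝ) := {a | MapClusterPt a atTop x} with hA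
  have hball : ∀ᶠ k in atTop, x k ∈ Metric.closedBall (0 : Fin n → ℝ) B :=
    Eventually.of_forall fun k => by simpa using hB k
  have hAcompact : IsCompact A :=
    (isCompact_closedBall (0 : Fin n → ℝ) B).of_isClosed_subset isClosed_setOfPred_clusterPt
      fun a ha => Metric.isClosed_closedBall.mem_of_mapClusterPt ha hball
  have hAΛ : A ⊆ Λ := by
    rcases A.eq_empty_or_nonempty with hempty | hne
    · simp [hempty]
    obtain ⟨b, hb, hmax⟩ := hAcompact.exists_isMaxOn hne hL.1.continuousOn
    have hLb : L b = 0 := by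
      obtain ⟨z, hzc, hz, rfl, hz0⟩ := hx.exists_solution hH hb
      exact hL.eq_zero_of_le hz hzc one_pos (hmax hz0)
    intro a ha
    obtain ⟨z, -, hz, rfl, -⟩ := hx.exists_solution hH ha
    by_contra hout
    have h1 := hL.2.2.2 z hz 1 2 zero_le_one one_lt_two hout
    have h2 : L (z 1) ≤ L b := hmax ha
    linarith [hL.2.1 (z 2)]
  refine tendsto_of_subseq_tendsto fun φ hφ => ?_
  obtain ⟨a, -, ψ, hψ, ha⟩ := tendsto_subseq_of_bounded
    (Metric.isBounded_closedBall (x := (0 : Fin n → ℝ)) (r := B)) (x := x ∘ φ)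
    fun k => by simpa using hB (φ k)
  have haA : a ∈ A := MapClusterPt.of_comp (hφ.comp hψ.tendsto_atTop) ha.mapClusterPt
  refine ⟨ψ, ?_⟩
  have := ((Metric.continuous_infDist_pt Λ).tendsto a).comp ha
  rwa [Metric.infDist_zero_of_mem (hAΛ haA)] at this

end IsPerturbedEuler

/-- Exponential maximal inequality for sums of small bounded martingale differences. -/
theorem measure_exists_le_sum_le {Ω : Type*} {m0 : MeasurableSpace Ω} {μ : Measure Ω}
    [IsProbabilityMeasure μ] (ℱ : Filtration ℕ m0) {y : ℕ → Ω → ℝ} {c : ℕ → ℝ}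
    (hy : ∀ i, StronglyMeasurable[ℱ (i + 1)] (y i)) (hc : ∀ i, c i ≤ 1)
    (hyc : ∀ i, ∀ᵐ ω ∂μ, |y i ω| ≤ c i) (hcond : ∀ i, μ[y i | ℱ i] =ᵐ[μ] 0) (a : ℝ) (M : ℕ) :
    μ {ω | ∃ m ≤ M, a ≤ ∑ i ∈ Finset.range m, y i ω} ≤
      ENNReal.ofReal (Real.exp (-a + ∑ i ∈ Finset.range M, c i ^ 2)) := by
  set S : ℕ → Ω → ℝ := fun m ω => Real.exp (∑ i ∈ Finset.range m, y i ω) with hS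
  have hadp : ∀ m, StronglyMeasurable[ℱ m] (S m) := fun m =>
    Real.continuous_exp.comp_stronglyMeasurable <|
      Finset.stronglyMeasurable_fun_sum _ fun i hi =>
        (hy i).mono (ℱ.mono (Nat.succ_le_of_lt (Finset.mem_range.1 hi)))
  have hSbdd : ∀ m, ∀ᵐ ω ∂μ, ‖S m ω‖ ≤ Real.exp m := fun m => by
    filter_upwards [ae_all_iff.2 hyc] with ω hω
    rw [Real.norm_of_nonneg (Real.exp_pos _).le, Real.exp_le_exp]
    calc ∑ i ∈ Finset.range m, y i ω ≤ ∑ i ∈ Finset.range m, 1 :=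
          Finset.sum_le_sum fun i _ => (le_abs_self _).trans ((hω i).trans (hc i))
      _ = m := by simp
  have hSmeas : ∀ m, AEStronglyMeasurable (S m) μ := fun m =>
    ((hadp m).mono (ℱ.le m)).aestronglyMeasurable
  have hSint : ∀ m, Integrable (S m) μ := fun m => .of_bound (hSmeas m) _ (hSbdd m)
  have hyint : ∀ m, Integrable (y m) μ := fun m =>
    .of_bound ((hy m).mono (ℱ.le _)).aestronglyMeasurable (c m) (hyc m)
  have hSy : ∀ m, Integrable (S m * y m) μ := fun m =>
    (hyint m).bdd_mul (hSmeas m) (hSbdd m)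
  have hSycond : ∀ m, μ[S m * y m | ℱ m] =ᵐ[μ] 0 := fun m => by
    filter_upwards [condExp_mul_of_stronglyMeasurable_left (hadp m) (hSy m) (hyint m), hcond m]
      with ω h1 h2
    rw [h1, Pi.mul_apply, h2, Pi.zero_apply, mul_zero]
  have hsucc : ∀ m ω, S (m + 1) ω = S m ω * Real.exp (y m ω) := fun m ω => by
    simp only [hS, Finset.sum_range_succ, Real.exp_add]
  have hsub : Submartingale S ℱ μ := by
    refine submartingale_nat hadp hSint fun m => ?_
    have h1 : μ[S m + S m * y m | ℱ m] ≤ᵐ[μ] μ[S (m + 1) | ℱ m] := by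
      refine condExp_mono ((hSint m).add (hSy m)) (hSint _) (Eventually.of_forall fun ω => ?_)
      simp only [Pi.add_apply, Pi.mul_apply, hsucc]
      nlinarith [Real.add_one_le_exp (y m ω), (Real.exp_pos _ : 0 < S m ω)]
    filter_upwards [h1, condExp_add (hSint m) (hSy m) (ℱ m), hSycond m] with ω h1 h2 h3
    rw [h2, Pi.add_apply, h3, condExp_of_stronglyMeasurable (ℱ.le m) (hadp m) (hSint m)] at h1
    simpa using h1
  have hSy0 : ∀ m, ∫ ω, S m ω * y m ω ∂μ = 0 := fun m => by
    have := integral_condExp (μ := μ) (f := S m * y m) (ℱ.le m)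
    rw [integral_congr_ae (hSycond m)] at this
    simpa using this.symm
  have hmean : ∀ m, ∫ ω, S m ω ∂μ ≤ Real.exp (∑ i ∈ Finset.range m, c i ^ 2) := fun m => by
    induction m with
    | zero => simp [hS]
    | succ m ih =>
      have h1 : ∫ ω, S (m + 1) ω ∂μ ≤ ∫ ω, (1 + c m ^ 2) * S m ω + S m ω * y m ω ∂μ := by
        refine integral_mono_ae (hSint _) (((hSint m).const_mul _).add (hSy m)) ?_
        filter_upwards [hyc m] with ω hω
        have h2 := (abs_le.1 (Real.abs_exp_sub_one_sub_id_le (hω.trans (hc m)))).2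
        have h3 : y m ω ^ 2 ≤ c m ^ 2 := sq_le_sq' (abs_le.1 hω).1 (abs_le.1 hω).2
        have h4 : (0 : ℝ) < S m ω := Real.exp_pos _
        rw [hsucc]
        nlinarith
      have h5 : ∫ ω, (1 + c m ^ 2) * S m ω + S m ω * y m ω ∂μ =
          (1 + c m ^ 2) * ∫ ω, S m ω ∂μ := by
        have h6 := integral_add ((hSint m).const_mul (1 + c m ^ 2)) (hSy m)
        simp only [Pi.mul_apply] at h6
        rw [h6, hSy0, add_zero, integral_const_mul]
      rw [h5] at h1
      rw [Finset.sum_range_succ, Real.exp_add, mul_comm]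
      refine h1.trans (mul_le_mul ?_ ih (integral_nonneg fun ω => (Real.exp_pos _).le)
        (Real.exp_pos _).le)
      linarith [Real.add_one_le_exp (c m ^ 2)]
  have hmax := maximal_ineq hsub (fun m ω => (Real.exp_pos _).le)
    (ε := (Real.exp a).toNNReal) M
  rw [Real.coe_toNNReal _ (Real.exp_pos a).le] at hmax
  set Z := {ω | Real.exp a ≤ (Finset.range (M + 1)).sup' Finset.nonempty_range_add_one
    fun k => S k ω} with hZ
  have hset : {ω | ∃ m ≤ M, a ≤ ∑ i ∈ Finset.range m, y i ω} ⊆ Z := by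
    rintro ω ⟨m, hm, ham⟩
    rw [hZ, Set.mem_ofPred_eq, Finset.le_sup'_iff]
    exact
      ⟨m, Finset.mem_range.2 (Nat.lt_succ_of_le hm), Real.exp_le_exp.2 ham⟩
  have hle : ENNReal.ofReal (Real.exp a) * μ Z ≤
      ENNReal.ofReal (Real.exp (∑ i ∈ Finset.range M, c i ^ 2)) :=
    hmax.trans <| ENNReal.ofReal_le_ofReal <|
      (setIntegral_le_integral (hSint M) (Eventually.of_forall fun ω => (Real.exp_pos _).le)).trans
        (hmean M)
  refine (measure_mono hset).trans ?_
  calc μ Z = ENNReal.ofReal (Real.exp (-a)) * (ENNReal.ofReal (Real.exp a) * μ Z) := by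
        rw [← mul_assoc, ← ENNReal.ofReal_mul (Real.exp_pos _).le, ← Real.exp_add]
        simp
    _ ≤ ENNReal.ofReal (Real.exp (-a)) *
        ENNReal.ofReal (Real.exp (∑ i ∈ Finset.range M, c i ^ 2)) := by gcongr
    _ = _ := by rw [← ENNReal.ofReal_mul (Real.exp_pos _).le, ← Real.exp_add]

lemma exists_last_stepTime_sub_le {α : ℕ → ℝ} (hτ : Tendsto (stepTime α) atTop atTop) {T : ℝ}
    (hT : 0 ≤ T) (k : ℕ) :
    ∃ M, k ≤ M ∧ stepTime α M - stepTime α k ≤ T ∧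
      ∀ m, stepTime α m - stepTime α k ≤ T → m ≤ M := by
  classical
  obtain ⟨K, hK⟩ := eventually_atTop.1 (hτ.eventually_gt_atTop (stepTime α k + T))
  have hbound : ∀ m, stepTime α m - stepTime α k ≤ T → m ≤ K := fun m hm => by
    by_contra! hlt
    linarith [hK m hlt.le]
  have hk : stepTime α k - stepTime α k ≤ T := by simpa using hT
  exact ⟨Nat.findGreatest (fun m => stepTime α m - stepTime α k ≤ T) K,
    Nat.le_findGreatest (hbound k hk) hk,
    Nat.findGreatest_spec (P := fun m => stepTime α m - stepTime α k ≤ T) (hbound k hk) hk,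
    fun m hm => Nat.le_findGreatest (hbound m hm) hm⟩

section Noise

variable {Ω : Type*} {m0 : MeasurableSpace Ω} {μ : Measure Ω} [IsProbabilityMeasure μ]
  {ℱ : Filtration ℕ m0} {α : ℕ → ℝ}

lemma eventually_forall_ge_mul_log_le (hαlog : α =o[atTop] fun k : ℕ => 1 / Real.log k)
    {η : ℝ} (hη : 0 < η) : ∀ᶠ k : ℕ in atTop, ∀ i, k ≤ i → α i * Real.log i ≤ η := by
  refine eventually_forall_ge_atTop.2 ?_
  filter_upwards [hαlog.def hη, eventually_gt_atTop 1] with i hi h1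
  have hlog : 0 < Real.log i := Real.log_pos (by exact_mod_cast h1)
  rw [Real.norm_eq_abs, Real.norm_of_nonneg (by positivity), mul_one_div] at hi
  exact (le_div_iff₀ hlog).1 ((le_abs_self _).trans hi)

lemma measure_exists_window_sum_ge_le (hα : ∀ k, 0 ≤ α k)
    (hτ : Tendsto (stepTime α) atTop atTop)
    (hαlog : α =o[atTop] fun k : ℕ => 1 / Real.log k) {X : ℕ → Ω → ℝ} {D : ℝ} (hD : 0 < D)
    (hX : ∀ i, StronglyMeasurable[ℱ (i + 1)] (X i)) (hXD : ∀ i, ∀ᵐ ω ∂μ, |X i ω| ≤ D)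
    (hcond : ∀ i, μ[X i | ℱ i] =ᵐ[μ] 0) {T ε : ℝ} (hT : 0 < T) (hε : 0 < ε) :
    ∀ᶠ k : ℕ in atTop, μ {ω | ∃ m, k ≤ m ∧ stepTime α m - stepTime α k ≤ T ∧
      ε ≤ ∑ i ∈ Finset.Ico k m, α i * X i ω} ≤ ENNReal.ofReal ((k : ℝ) ^ (-(3 / 2) : ℝ)) := by
  set η : ℝ := min (ε / (2 * D)) (ε ^ 2 / (8 * D ^ 2 * T)) with hη
  have hηpos : 0 < η := lt_min (by positivity) (by positivity)
  have hη1 : 2 * D * η ≤ ε := by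
    rw [mul_comm]; exact (le_div_iff₀ (by positivity)).1 (min_le_left _ _)
  have hη2 : 8 * D ^ 2 * T * η ≤ ε ^ 2 := by
    rw [mul_comm]; exact (le_div_iff₀ (by positivity)).1 (min_le_right _ _)
  filter_upwards [eventually_forall_ge_mul_log_le hαlog hηpos, eventually_gt_atTop 1]
    with k hk hk1
  have hkpos : (0 : ℝ) < k := by exact_mod_cast zero_lt_one.trans hk1
  have hlog : 0 < Real.log k := Real.log_pos (by exact_mod_cast hk1)
  obtain ⟨M, hkM, hMT, hMmax⟩ := exists_last_stepTime_sub_le hτ hT.le k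
  have hαη : ∀ i, k ≤ i → α i * Real.log k ≤ η := fun i hi =>
    (mul_le_mul_of_nonneg_left (Real.log_le_log hkpos (by exact_mod_cast hi)) (hα i)).trans
      (hk i hi)
  set r : ℝ := 2 * Real.log k / ε with hr
  have hrpos : 0 < r := by positivity
  have hrε : r * ε = 2 * Real.log k := by rw [hr]; field_simp
  set y : ℕ → Ω → ℝ := fun i ω => if i ∈ Finset.Ico k M then r * (α i * X i ω) else 0 with hy
  set c : ℕ → ℝ := fun i => if i ∈ Finset.Ico k M then r * (α i * D) else 0 with hc
  have hc1 : ∀ i, c i ≤ 1 := fun i => by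
    by_cases hi : i ∈ Finset.Ico k M
    · simp only [hc, hi, if_true]
      have h1 := hαη i (Finset.mem_Ico.1 hi).1
      have h2 : r * (α i * D) = 2 * D * (α i * Real.log k) / ε := by rw [hr]; ring
      rw [h2, div_le_one hε]
      exact (mul_le_mul_of_nonneg_left h1 (by positivity)).trans hη1
    · simp only [hc, hi, if_false, zero_le_one]
  have hcsum : ∑ i ∈ Finset.range M, c i ^ 2 ≤ Real.log k / 2 := by
    have h1 : ∑ i ∈ Finset.range M, c i ^ 2 = ∑ i ∈ Finset.Ico k M, (r * (α i * D)) ^ 2 := by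
      simp only [hc, ite_pow, ne_eq, OfNat.ofNat_ne_zero, not_false_eq_true, zero_pow,
        Finset.sum_ite_mem]
      congr 1
      ext i
      simp only [Finset.mem_inter, Finset.mem_range, Finset.mem_Ico]
      omega
    have h2 : ∀ i ∈ Finset.Ico k M,
        (r * (α i * D)) ^ 2 ≤ 4 * D ^ 2 * Real.log k * η / ε ^ 2 * α i := fun i hi => by
      have h3 := hαη i (Finset.mem_Ico.1 hi).1
      have h4 : (r * (α i * D)) ^ 2 =
          4 * D ^ 2 * Real.log k / ε ^ 2 * α i * (α i * Real.log k) := by rw [hr]; ring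
      have h5 : 4 * D ^ 2 * Real.log k * η / ε ^ 2 * α i =
          4 * D ^ 2 * Real.log k / ε ^ 2 * α i * η := by ring
      rw [h4, h5]
      have := hα i
      gcongr
    rw [h1]
    refine (Finset.sum_le_sum h2).trans ?_
    rw [← Finset.mul_sum, sum_Ico_eq_stepTime_sub α hkM]
    calc 4 * D ^ 2 * Real.log k * η / ε ^ 2 * (stepTime α M - stepTime α k)
        ≤ 4 * D ^ 2 * Real.log k * η / ε ^ 2 * T := by gcongr
      _ = (8 * D ^ 2 * T * η) / ε ^ 2 * (Real.log k / 2) := by ring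
      _ ≤ 1 * (Real.log k / 2) := by
          gcongr
          exact (div_le_one (by positivity)).2 hη2
      _ = Real.log k / 2 := one_mul _
  have hmain := measure_exists_le_sum_le (μ := μ) ℱ (y := y) (c := c) (fun i => ?_) hc1
    (fun i => ?_) (fun i => ?_) (2 * Real.log k) M
  · refine (measure_mono ?_).trans (hmain.trans (ENNReal.ofReal_le_ofReal ?_))
    · rintro ω ⟨m, hkm, hmT, hsum⟩
      refine ⟨m, hMmax m hmT, ?_⟩
      have h1 : ∑ i ∈ Finset.range m, y i ω = r * ∑ i ∈ Finset.Ico k m, α i * X i ω := by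
        simp only [hy, Finset.sum_ite_mem]
        rw [Finset.mul_sum]
        congr 1
        ext i
        have := hMmax m hmT
        simp only [Finset.mem_inter, Finset.mem_range, Finset.mem_Ico]
        omega
      rw [h1, ← hrε]
      exact mul_le_mul_of_nonneg_left hsum hrpos.le
    · rw [Real.rpow_def_of_pos hkpos, Real.exp_le_exp]
      linarith
  · by_cases hi : i ∈ Finset.Ico k M
    · simp only [hy, hi, if_true]
      exact ((hX i).const_mul _).const_mul _
    · simp only [hy, hi, if_false]
      exact stronglyMeasurable_const
  · filter_upwards [hXD i] with ω hω
    by_cases hi : i ∈ Finset.Ico k M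
    · simp only [hy, hc, hi, if_true]
      rw [abs_mul, abs_mul, abs_of_pos hrpos, abs_of_nonneg (hα i)]
      have := hα i
      gcongr
    · simp only [hy, hc, hi, if_false, abs_zero, le_refl]
  · by_cases hi : i ∈ Finset.Ico k M
    · have h1 : y i = (r * α i) • X i := by
        ext ω
        simp only [hy, hi, if_true, Pi.smul_apply, smul_eq_mul, mul_assoc]
      rw [h1]
      filter_upwards [condExp_smul (μ := μ) (r * α i) (X i) (ℱ i), hcond i] with ω h2 h3
      simp [h2, h3]
    · have h1 : y i = 0 := by
        ext ω
        simp only [hy, hi, if_false, Pi.zero_apply]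
      rw [h1, condExp_zero]

lemma ae_eventually_window_sum_lt (hα : ∀ k, 0 ≤ α k)
    (hτ : Tendsto (stepTime α) atTop atTop)
    (hαlog : α =o[atTop] fun k : ℕ => 1 / Real.log k) {X : ℕ → Ω → ℝ} {D : ℝ} (hD : 0 < D)
    (hX : ∀ i, StronglyMeasurable[ℱ (i + 1)] (X i)) (hXD : ∀ i, ∀ᵐ ω ∂μ, |X i ω| ≤ D)
    (hcond : ∀ i, μ[X i | ℱ i] =ᵐ[μ] 0) {T ε : ℝ} (hT : 0 < T) (hε : 0 < ε) :
    ∀ᵐ ω ∂μ, ∀ᶠ k in atTop, ∀ m, k ≤ m → stepTime α m - stepTime α k ≤ T →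
      ∑ i ∈ Finset.Ico k m, α i * X i ω < ε := by
  obtain ⟨K, hK⟩ := eventually_atTop.1
    (measure_exists_window_sum_ge_le hα hτ hαlog hD hX hXD hcond hT hε)
  set s : ℕ → Set Ω := fun k => {ω | K ≤ k ∧ ∃ m, k ≤ m ∧ stepTime α m - stepTime α k ≤ T ∧
      ε ≤ ∑ i ∈ Finset.Ico k m, α i * X i ω} with hs
  have hsum : ∑' k, μ (s k) ≠ ⊤ := by
    refine ne_top_of_le_ne_top
      (Real.summable_nat_rpow.2 (by norm_num : (-(3 / 2) : ℝ) < -1)).tsum_ofReal_ne_top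
      (ENNReal.tsum_le_tsum fun k => ?_)
    by_cases hk : K ≤ k
    · simpa only [hs, hk, true_and] using hK k hk
    · simp [hs, hk]
  filter_upwards [ae_eventually_notMem hsum] with ω hω
  filter_upwards [hω, eventually_ge_atTop K] with k hk hKk m hkm hmT
  by_contra! hle
  exact hk ⟨hKk, m, hkm, hmT, hle⟩

/-- Bounded martingale differences are asymptotically negligible noise for step sizes
`o(1 / log k)`. -/
theorem ae_isNegligibleNoise_real (hα : ∀ k, 0 ≤ α k)
    (hτ : Tendsto (stepTime α) atTop atTop)
    (hαlog : α =o[atTop] fun k : ℕ => 1 / Real.log k) {X : ℕ → Ω → ℝ} {D : ℝ}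
    (hX : ∀ i, StronglyMeasurable[ℱ (i + 1)] (X i)) (hXD : ∀ i, ∀ᵐ ω ∂μ, |X i ω| ≤ D)
    (hcond : ∀ i, μ[X i | ℱ i] =ᵐ[μ] 0) :
    ∀ᵐ ω ∂μ, IsNegligibleNoise α fun i => X i ω := by
  have hD : 0 < max D 1 := zero_lt_one.trans_le (le_max_right _ _)
  have hXD' : ∀ i, ∀ᵐ ω ∂μ, |X i ω| ≤ max D 1 := fun i =>
    (hXD i).mono fun ω hω => hω.trans (le_max_left _ _)
  have hpos : ∀ j : ℕ, (0 : ℝ) < (j : ℝ) + 1 := fun j => by positivity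
  have hup : ∀ᵐ ω ∂μ, ∀ j l : ℕ, ∀ᶠ k in atTop, ∀ m, k ≤ m →
      stepTime α m - stepTime α k ≤ (j : ℝ) + 1 →
      ∑ i ∈ Finset.Ico k m, α i * X i ω < 1 / ((l : ℝ) + 1) :=
    ae_all_iff.2 fun j => ae_all_iff.2 fun l =>
      ae_eventually_window_sum_lt hα hτ hαlog hD hX hXD' hcond (hpos j)
        (one_div_pos.2 (hpos l))
  have hlow : ∀ᵐ ω ∂μ, ∀ j l : ℕ, ∀ᶠ k in atTop, ∀ m, k ≤ m →
      stepTime α m - stepTime α k ≤ (j : ℝ) + 1 →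
      ∑ i ∈ Finset.Ico k m, α i * (-X i) ω < 1 / ((l : ℝ) + 1) := by
    refine ae_all_iff.2 fun j => ae_all_iff.2 fun l =>
      ae_eventually_window_sum_lt hα hτ hαlog hD (fun i => (hX i).neg) (fun i => ?_)
        (fun i => ?_) (hpos j) (one_div_pos.2 (hpos l))
    · simpa using hXD' i
    · filter_upwards [condExp_neg (μ := μ) (X i) (ℱ i), hcond i] with ω h1 h2
      simp [h1, h2]
  filter_upwards [hup, hlow] with ω hu hl T ε hε
  obtain ⟨j, hj⟩ := exists_nat_ge T
  obtain ⟨l, hl'⟩ := exists_nat_one_div_lt hε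
  filter_upwards [hu j l, hl j l] with k h1 h2 m hkm hmT
  have hT : stepTime α m - stepTime α k ≤ (j : ℝ) + 1 := by linarith
  have h3 := h1 m hkm hT
  have h4 := h2 m hkm hT
  simp only [Pi.neg_apply, mul_neg, Finset.sum_neg_distrib] at h4
  simp only [smul_eq_mul, Real.norm_eq_abs]
  exact abs_le.2 ⟨by linarith, by linarith⟩

/-- Vector-valued version of `ae_isNegligibleNoise_real`. -/
theorem ae_isNegligibleNoise {n : ℕ} (hα : ∀ k, 0 ≤ α k)
    (hτ : Tendsto (stepTime α) atTop atTop)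
    (hαlog : α =o[atTop] fun k : ℕ => 1 / Real.log k) {X : ℕ → Ω → Fin n → ℝ} {D : ℝ}
    (hX : ∀ i, StronglyMeasurable[ℱ (i + 1)] (X i)) (hXD : ∀ i, ∀ᵐ ω ∂μ, ‖X i ω‖ ≤ D)
    (hcond : ∀ i, μ[X i | ℱ i] =ᵐ[μ] 0) :
    ∀ᵐ ω ∂μ, IsNegligibleNoise α fun i => X i ω := by
  have hcoord : ∀ᵐ ω ∂μ, ∀ j : Fin n, IsNegligibleNoise α fun i => X i ω j := by
    refine ae_all_iff.2 fun j => ae_isNegligibleNoise_real (ℱ := ℱ) (D := D) hα hτ hαlog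
      (fun i => (continuous_apply j).comp_stronglyMeasurable (hX i)) (fun i => ?_) fun i => ?_
    · filter_upwards [hXD i] with ω hω
      exact (norm_le_pi_norm (X i ω) j).trans hω
    · have hint : Integrable (X i) μ :=
        .of_bound ((hX i).mono (ℱ.le _)).aestronglyMeasurable D (hXD i)
      filter_upwards [(ContinuousLinearMap.proj (R := ℝ) (φ := fun _ : Fin n => ℝ)
        j).comp_condExp_comm (m := ℱ i) hint, hcond i] with ω h1 h2
      refine Eq.trans h1.symm ?_
      simp [h2]
  filter_upwards [hcoord] with ω hω T ε hε
  filter_upwards [eventually_all.2 fun j => hω j T ε hε] with k hk m hkm hmT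
  refine (pi_norm_le_iff_of_nonneg hε.le).2 fun j => ?_
  simpa [Finset.sum_apply] using hk j m hkm hmT

end Noise

/-- The conditional expectation of a selection of `H ∘ θ` given a σ-algebra for which `θ` is
measurable is again a selection of `H ∘ θ`. -/
theorem IsMarchaud.condExp_mem {n : ℕ} {H : (Fin n → ℝ) → Set (Fin n → ℝ)} (hH : IsMarchaud H)
    {Ω : Type*} {m m0 : MeasurableSpace Ω} {μ : Measure Ω} [IsFiniteMeasure μ] (hm : m ≤ m0)
    {θ f : Ω → Fin n → ℝ} (hθ : Measurable[m] θ) (hf : Integrable f μ) {s : Set Ω}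
    (hs : MeasurableSet[m] s) (hmem : ∀ᵐ ω ∂μ, ω ∈ s → f ω ∈ H (θ ω)) :
    ∀ᵐ ω ∂μ, ω ∈ s → μ[f | m] ω ∈ H (θ ω) := by
  have hcell : ∀ b ∈ TopologicalSpace.countableBasis (Fin n → ℝ), ∀ᵐ ω ∂μ,
      ω ∈ s ∩ θ ⁻¹' b → μ[f | m] ω ∈ closedConvexHull ℝ (⋃ y ∈ b, H y) := fun b hb => by
    have hsb : MeasurableSet[m] (s ∩ θ ⁻¹' b) :=
      hs.inter (hθ (TopologicalSpace.isOpen_of_mem_countableBasis hb).measurableSet)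
    have hfb : ∀ᵐ ω ∂(μ.restrict (s ∩ θ ⁻¹' b)),
        f ω ∈ closedConvexHull ℝ (⋃ y ∈ b, H y) := by
      refine (ae_restrict_iff' (hm _ hsb)).2 ?_
      filter_upwards [hmem] with ω hω hωs
      exact subset_closedConvexHull (Set.mem_biUnion hωs.2 (hω hωs.1))
    refine (ae_restrict_iff' (hm _ hsb)).1 ?_
    filter_upwards [Convex.condExp_mem hm hf.restrict isClosed_closedConvexHull
      convex_closedConvexHull hfb, condExp_restrict_ae_eq_restrict hm hsb hf] with ω h1 h2
    rwa [h2] at h1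
  filter_upwards [(ae_ball_iff (TopologicalSpace.countable_countableBasis _)).2 hcell]
    with ω hω hωs
  have hclosed : IsClosed (H (θ ω)) := (hH.2.1 (θ ω)).2.1.isClosed
  rw [← hclosed.closure_eq, Metric.closure_eq_iInter_cthickening, Set.mem_iInter₂]
  intro ε hε
  obtain ⟨δ, hδ, hsub⟩ := hH.eventually_subset_cthickening (θ ω) hε
  obtain ⟨b, hb, hmemb, hbsub⟩ := (TopologicalSpace.isBasis_countableBasis
    (Fin n → ℝ)).mem_nhds_iff.1 (Metric.ball_mem_nhds (θ ω) hδ)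
  refine closedConvexHull_min ?_ ((hH.2.1 (θ ω)).2.2.cthickening ε)
    Metric.isClosed_cthickening (hω b hb ⟨hωs, hmemb⟩)
  exact Set.iUnion₂_subset fun y hy => hsub y (hbsub hy)

lemma measurable_comap_history {Ω E : Type*} [MeasurableSpace E] (θ : ℕ → Ω → E) {j k : ℕ}
    (hjk : j ≤ k) :
    Measurable[MeasurableSpace.comap (fun ω (i : Fin (k + 1)) => θ i ω) inferInstance] (θ j) := by
  let m : MeasurableSpace Ω :=
    MeasurableSpace.comap (fun ω (i : Fin (k + 1)) => θ i ω) inferInstance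
  have h : Measurable[m] fun ω (i : Fin (k + 1)) => θ i ω := comap_measurable _
  exact (measurable_pi_apply (⟨j, Nat.lt_succ_of_le hjk⟩ : Fin (k + 1))).comp h

/-- The filtration generated by the successive histories of a process. -/
def historyFiltration {Ω E : Type*} [m0 : MeasurableSpace Ω] [MeasurableSpace E]
    (θ : ℕ → Ω → E) (hθ : ∀ k, Measurable (θ k)) : Filtration ℕ m0 where
  seq k := MeasurableSpace.comap (fun ω (j : Fin (k + 1)) => θ j ω) inferInstance
  mono' i k hik := by
    rw [← measurable_iff_comap_le]
    exact @measurable_pi_lambda _ _ _ (_) _ _ fun j =>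
      measurable_comap_history θ ((Nat.le_of_lt_succ j.2).trans hik)
  le' k := by
    rw [← measurable_iff_comap_le]
    exact measurable_pi_iff.2 fun j => hθ j

lemma measurable_historyFiltration {Ω E : Type*} [MeasurableSpace Ω] [MeasurableSpace E]
    {θ : ℕ → Ω → E} (hθ : ∀ k, Measurable (θ k)) {j k : ℕ} (hjk : j ≤ k) :
    Measurable[historyFiltration θ hθ k] (θ j) :=
  measurable_comap_history θ hjk

/-- The almost sure convergence on the event that the iterates stay in a fixed ball. The noise
need not be adapted, so the increments are recentred at their conditional expectations, which are
again drifts selected from `H`. -/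
theorem ae_tendsto_infDist_of_forall_norm_le
    {n : ℕ} {H : (Fin n → ℝ) → Set (Fin n → ℝ)} (hH : IsMarchaud H)
    {Λ : Set (Fin n → ℝ)} {L : (Fin n → ℝ) → ℝ} (hL : IsLyapunovFn H Λ L)
    {Ω : Type*} [MeasurableSpace Ω] {μ : Measure Ω} [IsProbabilityMeasure μ]
    {θ g w : ℕ → Ω → Fin n → ℝ}
    (hθmeas : ∀ k, Measurable (θ k)) (hwmeas : ∀ k, Measurable (w k))
    {α : ℕ → ℝ} (hα0 : ∀ k, 0 ≤ α k) (hαsum : ¬ Summable α)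
    (hαlog : α =o[atTop] fun k : ℕ => 1 / Real.log k)
    (hupd : ∀ k ω, θ (k + 1) ω = θ k ω + α k • (g k ω + w k ω))
    (hg : ∀ k ω, g k ω ∈ H (θ k ω))
    {C : ℝ} (hwbdd : ∀ k, ∀ᵐ ω ∂μ, ‖w k ω‖ < C)
    (hmds : ∀ k, μ[w k | historyFiltration θ hθmeas k] =ᵐ[μ] 0) (R : ℝ) :
    ∀ᵐ ω ∂μ, (∀ k, ‖θ k ω‖ ≤ R) →
      Tendsto (fun k => Metric.infDist (θ k ω) Λ) atTop (𝓝 0) := by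
  obtain ⟨C', hC', hgrowth⟩ := hH.2.2
  have hατ : Tendsto (stepTime α) atTop atTop :=
    (not_summable_iff_tendsto_nat_atTop_of_nonneg hα0).1 hαsum
  have hαlim : Tendsto α atTop (𝓝 0) := hαlog.trans_tendsto <| by
    simp only [one_div]
    exact (Real.tendsto_log_atTop.comp tendsto_natCast_atTop_atTop).inv_tendsto_atTop
  set ℱ := historyFiltration θ hθmeas with hℱ
  set s : ℕ → Set Ω := fun k => θ k ⁻¹' Metric.closedBall 0 R with hs
  have hsmeas : ∀ k, MeasurableSet[ℱ k] (s k) := fun k =>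
    measurable_historyFiltration hθmeas le_rfl Metric.isClosed_closedBall.measurableSet
  set u : ℕ → Ω → Fin n → ℝ :=
    fun k => (s k).indicator fun ω => (α k)⁻¹ • (θ (k + 1) ω - θ k ω) with hu
  have humeas : ∀ k, StronglyMeasurable[ℱ (k + 1)] (u k) := fun k => by
    have h1 : Measurable[ℱ (k + 1)] (θ (k + 1)) := measurable_historyFiltration hθmeas le_rfl
    have h2 : Measurable[ℱ (k + 1)] (θ k) := measurable_historyFiltration hθmeas k.le_succ
    exact (((h1.sub h2).const_smul (α k)⁻¹).indicator
      (ℱ.mono k.le_succ _ (hsmeas k))).stronglyMeasurable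
  have huval : ∀ k ω, α k ≠ 0 → ω ∈ s k → u k ω = g k ω + w k ω := fun k ω hk hω => by
    simp only [hu, Set.indicator_of_mem hω, hupd k ω, add_sub_cancel_left]
    rw [inv_smul_smul₀ hk]
  set D : ℝ := C' * (1 + |R|) + |C| with hD
  have hDpos : 0 ≤ D := by positivity
  have hubdd : ∀ k, ∀ᵐ ω ∂μ, u k ω ∈ Metric.closedBall (0 : Fin n → ℝ) D := fun k => by
    filter_upwards [hwbdd k] with ω hω
    rw [mem_closedBall_zero_iff]
    by_cases hωs : ω ∈ s k
    · by_cases hk : α k = 0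
      · simpa [hu, hk] using hDpos
      · rw [huval k ω hk hωs]
        have h1 : ‖θ k ω‖ ≤ |R| := (mem_closedBall_zero_iff.1 hωs).trans (le_abs_self R)
        refine norm_add_le_of_le ((hgrowth _ _ (hg k ω)).trans ?_) (hω.le.trans (le_abs_self C))
        gcongr
    · simpa [hu, hωs] using hDpos
  have huint : ∀ k, Integrable (u k) μ := fun k =>
    .of_bound ((humeas k).mono (ℱ.le _)).aestronglyMeasurable D
      ((hubdd k).mono fun ω hω => mem_closedBall_zero_iff.1 hω)
  have hcondbdd : ∀ k, ∀ᵐ ω ∂μ, μ[u k | ℱ k] ω ∈ Metric.closedBall (0 : Fin n → ℝ) D :=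
    fun k => Convex.condExp_mem (ℱ.le k) (huint k) Metric.isClosed_closedBall
      (convex_closedBall _ _) (hubdd k)
  have hdrift : ∀ k, α k ≠ 0 → ∀ᵐ ω ∂μ, ω ∈ s k → μ[u k | ℱ k] ω ∈ H (θ k ω) :=
    fun k hk => by
      have hwint : Integrable (w k) μ :=
        .of_bound (hwmeas k).aestronglyMeasurable C ((hwbdd k).mono fun ω hω => hω.le)
      have hwint' : Integrable ((s k).indicator (w k)) μ :=
        hwint.indicator (ℱ.le k _ (hsmeas k))
      have hmem := hH.condExp_mem (ℱ.le k) (measurable_historyFiltration hθmeas le_rfl)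
        ((huint k).sub hwint') (hsmeas k) (Eventually.of_forall fun ω hω => by
          rw [Pi.sub_apply, huval k ω hk hω, Set.indicator_of_mem hω, add_sub_cancel_right]
          exact hg k ω)
      filter_upwards [hmem, condExp_sub (huint k) hwint' (ℱ k),
        condExp_indicator hwint (hsmeas k), hmds k] with ω h1 h2 h3 h4 hωs
      have h5 := h1 hωs
      rwa [h2, Pi.sub_apply, h3, Set.indicator_of_mem hωs, h4, Pi.zero_apply, sub_zero] at h5
  have hnoise : ∀ᵐ ω ∂μ, IsNegligibleNoise α fun k => (u k - μ[u k | ℱ k]) ω := by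
    refine ae_isNegligibleNoise (ℱ := ℱ) (D := D + D) hα0 hατ hαlog (fun k => ?_) (fun k => ?_)
      fun k => ?_
    · exact (humeas k).sub (stronglyMeasurable_condExp.mono (ℱ.mono k.le_succ))
    · filter_upwards [hubdd k, hcondbdd k] with ω h1 h2
      exact norm_sub_le_of_le (mem_closedBall_zero_iff.1 h1) (mem_closedBall_zero_iff.1 h2)
    · filter_upwards [condExp_sub (huint k) (integrable_condExp (m := ℱ k) (f := u k)) (ℱ k)]
        with ω h1
      rw [h1, condExp_of_stronglyMeasurable (ℱ.le k) stronglyMeasurable_condExp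
        integrable_condExp, sub_self]
  have hdrift' : ∀ᵐ ω ∂μ, ∀ k, α k ≠ 0 → ω ∈ s k → μ[u k | ℱ k] ω ∈ H (θ k ω) :=
    ae_all_iff.2 fun k => by
      by_cases hk : α k = 0
      · simp [hk]
      · exact (hdrift k hk).mono fun ω hω _ => hω
  filter_upwards [hnoise, hdrift'] with ω hnoiseω hdriftω hR
  have hωs : ∀ k, ω ∈ s k := fun k => mem_closedBall_zero_iff.2 (hR k)
  have hEuler : IsPerturbedEuler H α (fun k => θ k ω)
      (fun k => if α k = 0 then g k ω else μ[u k | ℱ k] ω)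
      (fun k => (u k - μ[u k | ℱ k]) ω) := by
    refine ⟨hα0, hαlim, hατ, fun k => ?_, fun k => ?_, ⟨R, hR⟩, hnoiseω⟩
    · by_cases hk : α k = 0
      · simp [hupd k ω, hk]
      · rw [if_neg hk, Pi.sub_apply, add_sub_cancel, huval k ω hk (hωs k), hupd k ω]
    · by_cases hk : α k = 0
      · simpa only [hk, if_true] using hg k ω
      · simpa only [hk, if_false] using hdriftω k hk (hωs k)
  exact hEuler.tendsto_infDist hH hL

/-- Stochastic approximation of a differential inclusion with a Lyapunov
function: bounded iterates of a stochastic approximation scheme driven by a Marchaud map with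
bounded martingale-difference noise converge almost surely to the set `Λ` on which a Lyapunov
function vanishes. -/
theorem stochastic_approximation_differential_inclusion
    {n : ℕ} (H : (Fin n → ℝ) → Set (Fin n → ℝ)) (hH : IsMarchaud H)
    (Λ : Set (Fin n → ℝ)) (L : (Fin n → ℝ) → ℝ) (hL : IsLyapunovFn H Λ L)
    {Ω : Type*} [MeasurableSpace Ω] (μ : Measure Ω) [IsProbabilityMeasure μ]
    (θ g w : ℕ → Ω → Fin n → ℝ)
    (hθmeas : ∀ k, Measurable (θ k)) (hwmeas : ∀ k, Measurable (w k))
    (α : ℕ → ℝ) (hα0 : ∀ k, 0 ≤ α k) (hαsum : ¬ Summable α)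
    (hαlog : α =o[Filter.atTop] fun k : ℕ => 1 / Real.log k)
    (hupd : ∀ k ω, θ (k + 1) ω = θ k ω + α k • (g k ω + w k ω))
    (hg : ∀ k ω, g k ω ∈ H (θ k ω))
    (C : ℝ) (hwbdd : ∀ k, ∀ᵐ ω ∂μ, ‖w k ω‖ < C)
    (hmds : ∀ k, μ[w k |
      MeasurableSpace.comap (fun ω (j : Fin (k + 1)) => θ j ω) inferInstance] =ᵐ[μ] 0)
    (hbdd : ∀ᵐ ω ∂μ, ∃ B : ℝ, ∀ k, ‖θ k ω‖ ≤ B) :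
    ∀ᵐ ω ∂μ, Filter.Tendsto (fun k => Metric.infDist (θ k ω) Λ)
      Filter.atTop (nhds 0) := by
  have hball : ∀ᵐ ω ∂μ, ∀ R : ℕ, (∀ k, ‖θ k ω‖ ≤ R) →
      Tendsto (fun k => Metric.infDist (θ k ω) Λ) atTop (𝓝 0) :=
    ae_all_iff.2 fun R => ae_tendsto_infDist_of_forall_norm_le hH hL hθmeas hwmeas hα0 hαsum
      hαlog hupd hg hwbdd hmds R
  filter_upwards [hball, hbdd] with ω hω hB
  obtain ⟨B, hB⟩ := hB
  obtain ⟨R, hR⟩ := exists_nat_ge B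
  exact hω R fun k => (hB k).trans hR
end

section
/- Approximation quality of QDP fixed points: for any λ ∈ [0,1]^{X×[m]}, if all reward distributions of the MDP are supported on [R_min, R_max], then w̄_1(η̂^π_λ, η^π) ≤ (V_max − V_min) / (2m(1−γ)), where V_max = R_max/(1−γ), V_min = R_min/(1−γ), η^π is the true return-distribution function (the unique fixed point of T^π), and η̂^π_λ is the unique fixed point of Π^λ T^π in F_{Q,m}^X. -/
open MeasureTheory ProbabilityTheory Set
open scoped ENNReal

/-- Generalized inverse CDF (least τ-quantile). -/
noncomputable def invCDF (ν : Measure ℝ) (τ : ℝ) : ℝ := sInf {y | τ ≤ cdf ν y}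

/-- Upper inverse CDF (greatest τ-quantile). -/
noncomputable def upInvCDF (ν : Measure ℝ) (τ : ℝ) : ℝ := sInf {y | τ < cdf ν y}

/-- Quantile level τ_i = (2i-1)/(2m), with `i : Fin m` zero-indexed. -/
noncomputable def qlevel (m : ℕ) (i : Fin m) : ℝ := (2 * (i : ℝ) + 1) / (2 * m)

/-- The uniform m-atom distribution with the given particle locations. -/
noncomputable def paramDistOne {m : ℕ} (θ : Fin m → ℝ) : Measure ℝ :=
  (m : ℝ≥0∞)⁻¹ • ∑ i : Fin m, Measure.dirac (θ i)

/-- Return-distribution function associated with quantile parameters θ. -/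
noncomputable def paramDist {X : Type*} {m : ℕ} (θ : X → Fin m → ℝ) : X → Measure ℝ :=
  fun x => paramDistOne (θ x)

/-- The distributional Bellman operator T^π. -/
noncomputable def bellman {X : Type*} [MeasurableSpace X]
    (P : X → Measure (ℝ × X)) (γ : ℝ) (η : X → Measure ℝ) : X → Measure ℝ :=
  fun x => (P x).bind (fun p => (η p.2).map (fun z => p.1 + γ * z))

/-- The quantile projection Π^λ, parameter-level output. -/
noncomputable def projParam {X : Type*} {m : ℕ} (lam : X → Fin m → ℝ)
    (η : X → Measure ℝ) : X → Fin m → ℝ :=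
  fun x i => (1 - lam x i) * invCDF (η x) (qlevel m i) + lam x i * upInvCDF (η x) (qlevel m i)

/-- The quantile projection Π^λ on return-distribution functions. -/
noncomputable def proj {X : Type*} {m : ℕ} (lam : X → Fin m → ℝ)
    (η : X → Measure ℝ) : X → Measure ℝ :=
  paramDist (projParam lam η)

/-- The projected distributional Bellman operator Π^λ T^π acting on parameters. -/
noncomputable def projBellmanParam {X : Type*} [MeasurableSpace X]
    (P : X → Measure (ℝ × X)) (γ : ℝ) {m : ℕ} (lam : X → Fin m → ℝ)
    (θ : X → Fin m → ℝ) : X → Fin m → ℝ :=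
  projParam lam (bellman P γ (paramDist θ))

/-- The cube [0,1]^{X×[m]} of interpolation parameters. -/
def unitCube (X : Type*) (m : ℕ) : Set (X → Fin m → ℝ) :=
  {lam | ∀ x i, lam x i ∈ Set.Icc (0:ℝ) 1}

/-- Wasserstein-∞ distance (valued in [0,∞]). -/
noncomputable def winf (ν ν' : Measure ℝ) : ℝ≥0∞ :=
  ⨆ t : Set.Ioo (0:ℝ) 1, ENNReal.ofReal |invCDF ν t - invCDF ν' t|

/-- Extension of w∞ to return-distribution functions: max over states. -/
noncomputable def wbar {X : Type*} (η η' : X → Measure ℝ) : ℝ≥0∞ :=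
  ⨆ x : X, winf (η x) (η' x)

/-- Wasserstein-1 distance between probability distributions on ℝ. -/
noncomputable def w1 (ν ν' : Measure ℝ) : ℝ :=
  ∫ t in Set.Ioo (0:ℝ) 1, |invCDF ν t - invCDF ν' t|

/-- Uniform m-atom distributions. -/
noncomputable def FQ (m : ℕ) : Set (Measure ℝ) :=
  {ν | ∃ z : Fin m → ℝ, ν = paramDistOne z}

/-- The `L¹` distance between cumulative distribution functions. -/
noncomputable def cdfDist (ν ν' : Measure ℝ) : ℝ≥0∞ := ∫⁻ y, ‖cdf ν y - cdf ν' y‖ₑ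

theorem cdfDist_triangle (ν₁ ν₂ ν₃ : Measure ℝ) :
    cdfDist ν₁ ν₃ ≤ cdfDist ν₁ ν₂ + cdfDist ν₂ ν₃ := by
  unfold cdfDist
  have hmeas : Measurable fun y => ‖cdf ν₁ y - cdf ν₂ y‖ₑ :=
    ((cdf ν₁).mono.measurable.sub (cdf ν₂).mono.measurable).enorm
  rw [← lintegral_add_left hmeas]
  refine lintegral_mono fun y => ?_
  have h : cdf ν₁ y - cdf ν₃ y = (cdf ν₁ y - cdf ν₂ y) + (cdf ν₂ y - cdf ν₃ y) := by ring
  rw [h]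
  exact enorm_add_le _ _

section Quantile

variable {ν : Measure ℝ} {t y a b : ℝ}

theorem bddBelow_setOf_le_cdf (ht : 0 < t) : BddBelow {y | t ≤ cdf ν y} := by
  obtain ⟨b, hb⟩ := ((tendsto_cdf_atBot ν).eventually_lt_const ht).exists
  exact ⟨b, fun y hy => le_of_lt ((cdf ν).mono.reflect_lt (hb.trans_le hy))⟩

theorem setOf_lt_cdf_subset : {y | t < cdf ν y} ⊆ {y | t ≤ cdf ν y} :=
  fun _ h => mem_ofPred.2 (le_of_lt (mem_ofPred.1 h))

theorem setOf_lt_cdf_nonempty (ht : t < 1) : {y | t < cdf ν y}.Nonempty :=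
  ((tendsto_cdf_atTop ν).eventually_const_lt ht).exists

theorem invCDF_le_iff (ht0 : 0 < t) (ht1 : t < 1) : invCDF ν t ≤ y ↔ t ≤ cdf ν y := by
  have hne : {y | t ≤ cdf ν y}.Nonempty :=
    (setOf_lt_cdf_nonempty ht1).mono setOf_lt_cdf_subset
  refine ⟨fun h => ?_, fun h => csInf_le (bddBelow_setOf_le_cdf ht0) h⟩
  have hright : Filter.Tendsto (cdf ν) (nhdsWithin y (Ioi y)) (nhds (cdf ν y)) :=
    ((cdf ν).right_continuous y).mono_left (nhdsWithin_mono _ Ioi_subset_Ici_self)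
  refine ge_of_tendsto hright ?_
  filter_upwards [self_mem_nhdsWithin] with z hz
  obtain ⟨w, hw, hwz⟩ := exists_lt_of_csInf_lt hne (lt_of_le_of_lt h hz)
  exact le_trans hw ((cdf ν).mono hwz.le)

theorem cdf_le_of_lt_upInvCDF (ht0 : 0 < t) (h : y < upInvCDF ν t) : cdf ν y ≤ t := by
  by_contra! hlt
  exact absurd h (not_lt.2 (csInf_le
    ((bddBelow_setOf_le_cdf ht0).mono setOf_lt_cdf_subset) hlt))

theorem invCDF_le_upInvCDF (ht0 : 0 < t) (ht1 : t < 1) : invCDF ν t ≤ upInvCDF ν t :=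
  csInf_le_csInf (bddBelow_setOf_le_cdf ht0) (setOf_lt_cdf_nonempty ht1)
    setOf_lt_cdf_subset

theorem cdf_eq_zero_of_lt [IsProbabilityMeasure ν] (h : ν (Icc a b)ᶜ = 0) (hy : y < a) :
    cdf ν y = 0 := by
  rw [cdf_eq_real, measureReal_def, measure_mono_null _ h, ENNReal.toReal_zero]
  exact fun z hz hz' => absurd (hz'.1.trans hz) (not_le.2 hy)

theorem cdf_eq_one_of_le [IsProbabilityMeasure ν] (h : ν (Icc a b)ᶜ = 0) (hy : b ≤ y) :
    cdf ν y = 1 := by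
  rw [cdf_eq_real]
  have h0 : ν.real (Iic y)ᶜ = 0 := by
    rw [measureReal_def, measure_mono_null _ h, ENNReal.toReal_zero]
    exact fun z hz hz' => hz (hz'.2.trans hy)
  have h1 := probReal_compl_eq_one_sub (μ := ν) (measurableSet_Iic (a := y))
  linarith

theorem le_invCDF [IsProbabilityMeasure ν] (h : ν (Icc a b)ᶜ = 0) (ht0 : 0 < t) (ht1 : t < 1) :
    a ≤ invCDF ν t := by
  by_contra! hlt
  have h1 := (invCDF_le_iff ht0 ht1).1 (le_refl (invCDF ν t))
  rw [cdf_eq_zero_of_lt h hlt] at h1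
  linarith

theorem upInvCDF_le [IsProbabilityMeasure ν] (h : ν (Icc a b)ᶜ = 0) (ht0 : 0 < t) (ht1 : t < 1) :
    upInvCDF ν t ≤ b := by
  by_contra! hlt
  have h1 := cdf_le_of_lt_upInvCDF ht0 hlt
  rw [cdf_eq_one_of_le h le_rfl] at h1
  linarith

/-- The quantile form of the Wasserstein-1 distance is at most the CDF form. -/
theorem lintegral_invCDF_sub_le (ν ν' : Measure ℝ) :
    ∫⁻ t in Ioo (0:ℝ) 1, ‖invCDF ν t - invCDF ν' t‖ₑ ≤ cdfDist ν ν' := by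
  have hF := (cdf ν).mono.measurable
  have hG := (cdf ν').mono.measurable
  let S : Set (ℝ × ℝ) := {p | cdf ν' p.2 < p.1 ∧ p.1 ≤ cdf ν p.2} ∪
    {p | cdf ν p.2 < p.1 ∧ p.1 ≤ cdf ν' p.2}
  have hS : MeasurableSet S :=
    ((measurableSet_lt (hG.comp measurable_snd) measurable_fst).inter
      (measurableSet_le measurable_fst (hF.comp measurable_snd))).union
    ((measurableSet_lt (hF.comp measurable_snd) measurable_fst).inter
      (measurableSet_le measurable_fst (hG.comp measurable_snd)))
  have hleft : ∀ t ∈ Ioo (0:ℝ) 1,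
      ‖invCDF ν t - invCDF ν' t‖ₑ ≤ ∫⁻ y, S.indicator 1 (t, y) := by
    intro t ht
    have hset : (fun y => S.indicator (1 : ℝ × ℝ → ℝ≥0∞) (t, y)) =
        (Ico (invCDF ν t) (invCDF ν' t) ∪ Ico (invCDF ν' t) (invCDF ν t)).indicator 1 := by
      funext y
      simp only [indicator, S, mem_union, mem_ofPred_eq, mem_Ico, ← not_le,
        invCDF_le_iff ht.1 ht.2, Pi.one_apply]
      congr 1
      grind
    rw [hset, lintegral_indicator_one (measurableSet_Ico.union measurableSet_Ico)]
    rcases le_total (invCDF ν t) (invCDF ν' t) with h | h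
    · refine le_trans ?_ (measure_mono subset_union_left)
      rw [Real.volume_Ico, ← enorm_neg, neg_sub, Real.enorm_of_nonneg (by linarith)]
    · refine le_trans ?_ (measure_mono subset_union_right)
      rw [Real.volume_Ico, Real.enorm_of_nonneg (by linarith)]
  calc ∫⁻ t in Ioo (0:ℝ) 1, ‖invCDF ν t - invCDF ν' t‖ₑ
      ≤ ∫⁻ t in Ioo (0:ℝ) 1, ∫⁻ y, S.indicator 1 (t, y) :=
        setLIntegral_mono' measurableSet_Ioo hleft
    _ ≤ ∫⁻ t, ∫⁻ y, S.indicator 1 (t, y) := setLIntegral_le_lintegral _ _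
    _ = ∫⁻ y, ∫⁻ t, S.indicator 1 (t, y) :=
        lintegral_lintegral_swap (f := fun t y => S.indicator 1 (t, y))
          ((measurable_one.indicator hS).aemeasurable)
    _ ≤ cdfDist ν ν' := by
        refine lintegral_mono fun y => ?_
        have hset : (fun t => S.indicator (1 : ℝ × ℝ → ℝ≥0∞) (t, y)) =
            (Ioc (cdf ν' y) (cdf ν y) ∪ Ioc (cdf ν y) (cdf ν' y)).indicator 1 := by
          funext t
          simp only [indicator, S, mem_union, mem_ofPred_eq, mem_Ioc, Pi.one_apply]
        simp only [hset]
        rw [lintegral_indicator_one (measurableSet_Ioc.union measurableSet_Ioc)]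
        rcases le_total (cdf ν y) (cdf ν' y) with h | h
        · rw [Ioc_eq_empty (not_lt.2 h), empty_union, Real.volume_Ioc, ← enorm_neg, neg_sub,
            Real.enorm_of_nonneg (by linarith)]
        · rw [Ioc_eq_empty (not_lt.2 h), union_empty, Real.volume_Ioc,
            Real.enorm_of_nonneg (by linarith)]

theorem w1_le_toReal_cdfDist {ν' : Measure ℝ} (h : cdfDist ν ν' ≠ ∞) :
    w1 ν ν' ≤ (cdfDist ν ν').toReal := by
  unfold w1
  refine (Real.le_norm_self _).trans ((norm_integral_le_lintegral_norm _).trans ?_)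
  refine ENNReal.toReal_mono h (le_trans (le_of_eq ?_) (lintegral_invCDF_sub_le ν ν'))
  simp only [ofReal_norm, Real.enorm_abs]

/-- A uniform bound on the CDF difference of two distributions on `[a, b]` bounds `cdfDist`. -/
theorem cdfDist_le_of_support {ν' : Measure ℝ} [IsProbabilityMeasure ν] [IsProbabilityMeasure ν']
    {c : ℝ} (h : ν (Icc a b)ᶜ = 0) (h' : ν' (Icc a b)ᶜ = 0)
    (hc : ∀ y, |cdf ν y - cdf ν' y| ≤ c) :
    cdfDist ν ν' ≤ ENNReal.ofReal c * ENNReal.ofReal (b - a) := by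
  have hle : ∀ y, ‖cdf ν y - cdf ν' y‖ₑ ≤ (Ico a b).indicator (fun _ => ENNReal.ofReal c) y := by
    intro y
    by_cases hy : y ∈ Ico a b
    · rw [indicator_of_mem hy, Real.enorm_eq_ofReal_abs]
      exact ENNReal.ofReal_le_ofReal (hc y)
    · have : cdf ν y - cdf ν' y = 0 := by
        rcases lt_or_ge y a with hya | hya
        · rw [cdf_eq_zero_of_lt h hya, cdf_eq_zero_of_lt h' hya, sub_zero]
        · have hyb : b ≤ y := not_lt.1 fun hyb => hy ⟨hya, hyb⟩
          rw [cdf_eq_one_of_le h hyb, cdf_eq_one_of_le h' hyb, sub_self]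
      simp [this]
  refine (lintegral_mono hle).trans (le_of_eq ?_)
  rw [lintegral_indicator_const measurableSet_Ico, Real.volume_Ico]

end Quantile

section Projection

variable {m : ℕ}

theorem qlevel_pos (i : Fin m) : 0 < qlevel m i := by
  have : (0:ℝ) < m := by exact_mod_cast i.pos
  unfold qlevel
  positivity

theorem qlevel_lt_one (i : Fin m) : qlevel m i < 1 := by
  have h0 : (0:ℝ) < m := by exact_mod_cast i.pos
  have h1 : ((i:ℕ):ℝ) + 1 ≤ m := by exact_mod_cast i.isLt
  unfold qlevel
  rw [div_lt_one (by positivity)]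
  linarith

theorem isProbabilityMeasure_paramDistOne (hm : 0 < m) (θ : Fin m → ℝ) :
    IsProbabilityMeasure (paramDistOne θ) := by
  constructor
  simp only [paramDistOne, Measure.smul_apply, Measure.finsetSum_apply, measure_univ,
    Finset.sum_const, Finset.card_univ, Fintype.card_fin, smul_eq_mul, nsmul_eq_mul, mul_one]
  exact ENNReal.inv_mul_cancel (by exact_mod_cast hm.ne') (by simp)

theorem cdf_paramDistOne (hm : 0 < m) (θ : Fin m → ℝ) (y : ℝ) :
    cdf (paramDistOne θ) y = (Finset.univ.filter fun i => θ i ≤ y).card / m := by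
  have := isProbabilityMeasure_paramDistOne hm θ
  rw [cdf_eq_real, measureReal_def]
  simp only [paramDistOne, Measure.smul_apply, Measure.finsetSum_apply,
    Measure.dirac_apply' _ measurableSet_Iic, smul_eq_mul, indicator, mem_Iic, Pi.one_apply,
    Finset.sum_boole, ENNReal.toReal_mul, ENNReal.toReal_inv, ENNReal.toReal_natCast]
  rw [div_eq_inv_mul]

theorem paramDistOne_compl_Icc {θ : Fin m → ℝ} {a b : ℝ} (h : ∀ i, θ i ∈ Icc a b) :
    paramDistOne θ (Icc a b)ᶜ = 0 := by
  simp [paramDistOne, Measure.dirac_apply' _ measurableSet_Icc.compl, h, -Set.mem_Icc]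

/-- Placing an atom of mass `1/m` at a `τ_i`-quantile for each `i` changes the CDF by at most
`1/(2m)`. -/
theorem abs_cdf_paramDistOne_sub_le (hm : 0 < m) {ν : Measure ℝ} {θ : Fin m → ℝ}
    (hlow : ∀ i, invCDF ν (qlevel m i) ≤ θ i) (hup : ∀ i, θ i ≤ upInvCDF ν (qlevel m i))
    (y : ℝ) : |cdf (paramDistOne θ) y - cdf ν y| ≤ 1 / (2 * m) := by
  have hm' : (0:ℝ) < m := by exact_mod_cast hm
  rw [cdf_paramDistOne hm]
  set s := Finset.univ.filter fun i => θ i ≤ y with hs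
  have hcard : s.card ≤ m := by simpa using s.card_le_univ
  have hq : ∀ i : Fin m, qlevel m i * m = i + 1 / 2 := by
    intro i
    unfold qlevel
    field_simp
  have hk : (s.card / m : ℝ) * m = s.card := by field_simp
  have hc : (1 / (2 * m) : ℝ) * m = 1 / 2 := by field_simp
  rw [abs_le]
  constructor
  · rcases hcard.eq_or_lt with hkm | hkm
    · have h1 := cdf_le_one ν y
      have h2 : (0:ℝ) < 1 / (2 * m) := by positivity
      rw [hkm, div_self hm'.ne']
      linarith
    · obtain ⟨i, hi, his⟩ : ∃ i ∈ Finset.Iic (⟨s.card, hkm⟩ : Fin m), i ∉ s := by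
        by_contra! hsub
        have := Finset.card_le_card (show Finset.Iic (⟨s.card, hkm⟩ : Fin m) ⊆ s from hsub)
        rw [Fin.card_Iic] at this
        simp at this
      have hθ : y < θ i := by simpa [hs] using his
      have h1 := cdf_le_of_lt_upInvCDF (qlevel_pos i) (hθ.trans_le (hup i))
      have h2 : ((i:ℕ):ℝ) ≤ s.card := by exact_mod_cast Fin.le_def.1 (Finset.mem_Iic.1 hi)
      have h3 := mul_le_mul_of_nonneg_right h1 hm'.le
      rw [hq] at h3
      refine le_of_mul_le_mul_right ?_ hm'
      rw [neg_mul, sub_mul, hk, hc]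
      linarith
  · rcases Nat.eq_zero_or_pos s.card with hk0 | hk0
    · have h1 := cdf_nonneg ν y
      have h2 : (0:ℝ) < 1 / (2 * m) := by positivity
      rw [hk0, Nat.cast_zero, zero_div]
      linarith
    · have hlt : s.card - 1 < m := by omega
      obtain ⟨i, his, hi⟩ : ∃ i ∈ s, i ∉ Finset.Iio (⟨s.card - 1, hlt⟩ : Fin m) := by
        by_contra! hsub
        have := Finset.card_le_card (show s ⊆ Finset.Iio (⟨s.card - 1, hlt⟩ : Fin m) from hsub)
        rw [Fin.card_Iio] at this
        simp only at this
        omega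
      have hθ : θ i ≤ y := by simpa [hs] using his
      have h1 := (invCDF_le_iff (qlevel_pos i) (qlevel_lt_one i)).1 ((hlow i).trans hθ)
      have h2 : (s.card : ℝ) ≤ i + 1 := by
        have hi' : s.card - 1 ≤ (i : ℕ) := Fin.le_def.1 (not_lt.1 fun h => hi (Finset.mem_Iio.2 h))
        exact_mod_cast (by omega : s.card ≤ (i : ℕ) + 1)
      have h3 := mul_le_mul_of_nonneg_right h1 hm'.le
      rw [hq] at h3
      refine le_of_mul_le_mul_right ?_ hm'
      rw [sub_mul, hk, hc]
      linarith

variable {X : Type*} {lam : X → Fin m → ℝ}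

theorem invCDF_le_projParam (hlam : lam ∈ unitCube X m) (η : X → Measure ℝ) (x : X) (i : Fin m) :
    invCDF (η x) (qlevel m i) ≤ projParam lam η x i := by
  have h := invCDF_le_upInvCDF (ν := η x) (qlevel_pos i) (qlevel_lt_one i)
  have h0 := (hlam x i).1
  unfold projParam
  nlinarith

theorem projParam_le_upInvCDF (hlam : lam ∈ unitCube X m) (η : X → Measure ℝ) (x : X)
    (i : Fin m) : projParam lam η x i ≤ upInvCDF (η x) (qlevel m i) := by
  have h := invCDF_le_upInvCDF (ν := η x) (qlevel_pos i) (qlevel_lt_one i)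
  have h1 := (hlam x i).2
  unfold projParam
  nlinarith

end Projection

section Bellman

variable {X : Type*} [Fintype X] [MeasurableSpace X] [MeasurableSingletonClass X]
  {P : X → Measure (ℝ × X)} {γ : ℝ} {η η' : X → Measure ℝ}

theorem measurable_map_add_mul (hη : ∀ x, IsProbabilityMeasure (η x)) :
    Measurable fun p : ℝ × X => (η p.2).map (fun z => p.1 + γ * z) := by
  refine measurable_from_prod_countable_left fun x => ?_
  refine Measure.measurable_of_measurable_coe _ fun s hs => ?_
  have hmeas : Measurable fun q : ℝ × ℝ => q.1 + γ * q.2 := by fun_prop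
  have h := measurable_measure_prodMk_left (ν := η x) (hmeas hs)
  convert h using 2 with r
  rw [Measure.map_apply (by fun_prop) hs]
  rfl

theorem bellman_apply (hη : ∀ x, IsProbabilityMeasure (η x)) (x : X) {s : Set ℝ}
    (hs : MeasurableSet s) :
    bellman P γ η x s = ∫⁻ p, η p.2 ((fun z => p.1 + γ * z) ⁻¹' s) ∂(P x) := by
  unfold bellman
  rw [Measure.bind_apply hs (measurable_map_add_mul hη).aemeasurable]
  exact lintegral_congr fun p => Measure.map_apply (by fun_prop) hs

theorem isProbabilityMeasure_bellman (hP : ∀ x, IsProbabilityMeasure (P x))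
    (hη : ∀ x, IsProbabilityMeasure (η x)) (x : X) :
    IsProbabilityMeasure (bellman P γ η x) := by
  constructor
  rw [bellman_apply hη x MeasurableSet.univ]
  simp

theorem bellman_compl_Icc_le (hP : ∀ x, IsProbabilityMeasure (P x)) (hγ0 : 0 ≤ γ)
    {Rmin Rmax : ℝ} (hsupp : ∀ x, P x {p : ℝ × X | p.1 ∈ Set.Icc Rmin Rmax}ᶜ = 0)
    (hη : ∀ x, IsProbabilityMeasure (η x)) (a b : ℝ) (x : X) :
    bellman P γ η x (Icc (Rmin + γ * a) (Rmax + γ * b))ᶜ ≤ ⨆ x', η x' (Icc a b)ᶜ := by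
  rw [bellman_apply hη x measurableSet_Icc.compl]
  calc _ ≤ ∫⁻ _, (⨆ x', η x' (Icc a b)ᶜ) ∂(P x) := by
        refine lintegral_mono_ae ?_
        have hae : ∀ᵐ p ∂(P x), p.1 ∈ Icc Rmin Rmax := hsupp x
        filter_upwards [hae] with p hp
        refine le_trans (measure_mono ?_) (le_iSup (fun x' => η x' (Icc a b)ᶜ) p.2)
        intro z hz hzab
        refine hz ⟨?_, ?_⟩
        · exact add_le_add hp.1 (mul_le_mul_of_nonneg_left hzab.1 hγ0)
        · exact add_le_add hp.2 (mul_le_mul_of_nonneg_left hzab.2 hγ0)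
    _ = _ := by simp

theorem cdf_bellman (hP : ∀ x, IsProbabilityMeasure (P x)) (hγ : 0 < γ)
    (hη : ∀ x, IsProbabilityMeasure (η x)) (x : X) (y : ℝ) :
    ENNReal.ofReal (cdf (bellman P γ η x) y) =
      ∫⁻ p, ENNReal.ofReal (cdf (η p.2) ((y - p.1) / γ)) ∂(P x) := by
  have := isProbabilityMeasure_bellman (γ := γ) hP hη x
  rw [ofReal_cdf, bellman_apply hη x measurableSet_Iic]
  refine lintegral_congr fun p => ?_
  rw [ofReal_cdf]
  congr 1
  ext z
  simp only [mem_preimage, mem_Iic, le_div_iff₀ hγ]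
  constructor <;> intro h <;> linarith

theorem measurable_uncurry_cdf (η : X → Measure ℝ) :
    Measurable fun q : ℝ × X => cdf (η q.2) q.1 :=
  measurable_from_prod_countable_left fun x => (cdf (η x)).mono.measurable

theorem measurable_cdf_rescaled (η : X → Measure ℝ) :
    Measurable fun q : ℝ × (ℝ × X) => cdf (η q.2.2) ((q.1 - q.2.1) / γ) :=
  (measurable_uncurry_cdf η).comp
    (f := fun q : ℝ × (ℝ × X) => ((q.1 - q.2.1) / γ, q.2.2)) (by fun_prop)

theorem enorm_cdf_bellman_sub_le (hP : ∀ x, IsProbabilityMeasure (P x)) (hγ : 0 < γ)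
    (hη : ∀ x, IsProbabilityMeasure (η x)) (hη' : ∀ x, IsProbabilityMeasure (η' x))
    (x : X) (y : ℝ) :
    ‖cdf (bellman P γ η x) y - cdf (bellman P γ η' x) y‖ₑ ≤
      ∫⁻ p, ‖cdf (η p.2) ((y - p.1) / γ) - cdf (η' p.2) ((y - p.1) / γ)‖ₑ ∂(P x) := by
  have hmeas : ∀ ζ : X → Measure ℝ,
      Measurable fun p : ℝ × X => cdf (ζ p.2) ((y - p.1) / γ) := fun ζ =>
    (measurable_cdf_rescaled ζ).comp measurable_prodMk_left
  have hint : ∀ ζ : X → Measure ℝ,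
      Integrable (fun p : ℝ × X => cdf (ζ p.2) ((y - p.1) / γ)) (P x) := fun ζ =>
    Integrable.of_bound (hmeas ζ).aestronglyMeasurable 1 (Filter.Eventually.of_forall fun p => by
      rw [Real.norm_of_nonneg (cdf_nonneg _ _)]
      exact cdf_le_one _ _)
  have heq : ∀ ζ : X → Measure ℝ, (∀ x, IsProbabilityMeasure (ζ x)) →
      cdf (bellman P γ ζ x) y = ∫ p, cdf (ζ p.2) ((y - p.1) / γ) ∂(P x) := by
    intro ζ hζ
    rw [integral_eq_lintegral_of_nonneg_ae (Filter.Eventually.of_forall fun p => cdf_nonneg _ _)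
      (hmeas ζ).aestronglyMeasurable, ← cdf_bellman hP hγ hζ,
      ENNReal.toReal_ofReal (cdf_nonneg _ _)]
  rw [heq η hη, heq η' hη', ← integral_sub (hint η) (hint η')]
  exact enorm_integral_le_lintegral_enorm _

theorem lintegral_comp_sub_div {f : ℝ → ℝ≥0∞} (hf : Measurable f) (hγ : 0 < γ) (r : ℝ) :
    ∫⁻ y, f ((y - r) / γ) = ENNReal.ofReal γ * ∫⁻ z, f z := by
  rw [lintegral_sub_right_eq_self (fun y => f (y / γ)) r]
  conv_lhs => rw [← Real.smul_map_volume_mul_left hγ.ne']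
  rw [lintegral_smul_measure, lintegral_map (by fun_prop) (by fun_prop), abs_of_pos hγ,
    smul_eq_mul]
  congr 2
  funext z
  rw [mul_div_cancel_left₀ z hγ.ne']

/-- The distributional Bellman operator is a `γ`-contraction for the supremum of `cdfDist`. -/
theorem cdfDist_bellman_le (hP : ∀ x, IsProbabilityMeasure (P x)) (hγ0 : 0 ≤ γ)
    (hη : ∀ x, IsProbabilityMeasure (η x)) (hη' : ∀ x, IsProbabilityMeasure (η' x)) (x : X) :
    cdfDist (bellman P γ η x) (bellman P γ η' x) ≤
      ENNReal.ofReal γ * ⨆ x', cdfDist (η x') (η' x') := by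
  rcases hγ0.eq_or_lt with rfl | hγ
  · have h : bellman P 0 η x = bellman P 0 η' x := by
      simp only [bellman, zero_mul, add_zero, Measure.map_const, measure_univ, one_smul]
    simp [h, cdfDist]
  · calc cdfDist (bellman P γ η x) (bellman P γ η' x)
        ≤ ∫⁻ y, ∫⁻ p, ‖cdf (η p.2) ((y - p.1) / γ) - cdf (η' p.2) ((y - p.1) / γ)‖ₑ ∂(P x) :=
          lintegral_mono fun y => enorm_cdf_bellman_sub_le hP hγ hη hη' x y
      _ = ∫⁻ p, (∫⁻ y,
            ‖cdf (η p.2) ((y - p.1) / γ) - cdf (η' p.2) ((y - p.1) / γ)‖ₑ) ∂(P x) :=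
          lintegral_lintegral_swap
            (f := fun y (p : ℝ × X) =>
              ‖cdf (η p.2) ((y - p.1) / γ) - cdf (η' p.2) ((y - p.1) / γ)‖ₑ)
            ((measurable_cdf_rescaled η).sub (measurable_cdf_rescaled η')).enorm.aemeasurable
      _ = ∫⁻ p, ENNReal.ofReal γ * cdfDist (η p.2) (η' p.2) ∂(P x) :=
          lintegral_congr fun p => lintegral_comp_sub_div
            (f := fun z => ‖cdf (η p.2) z - cdf (η' p.2) z‖ₑ)
            ((cdf (η p.2)).mono.measurable.sub (cdf (η' p.2)).mono.measurable).enorm hγ p.1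
      _ ≤ ∫⁻ _, ENNReal.ofReal γ * (⨆ x', cdfDist (η x') (η' x')) ∂(P x) :=
          lintegral_mono fun p => mul_le_mul_right
            (le_iSup (fun x' => cdfDist (η x') (η' x')) p.2) _
      _ = _ := by simp

theorem tendsto_measure_compl_Icc_atTop (ν : Measure ℝ) [IsFiniteMeasure ν] (a b : ℝ) :
    Filter.Tendsto (fun c : ℝ => ν (Icc (a - c) (b + c))ᶜ) Filter.atTop (nhds 0) := by
  have h := tendsto_measure_iInter_atTop (μ := ν) (s := fun c : ℝ => (Icc (a - c) (b + c))ᶜ)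
    (fun c => measurableSet_Icc.compl.nullMeasurableSet)
    (fun c d hcd => compl_subset_compl.2 (Icc_subset_Icc (by linarith) (by linarith)))
    ⟨0, measure_ne_top _ _⟩
  have hempty : ⋂ c : ℝ, (Icc (a - c) (b + c))ᶜ = ∅ := by
    refine eq_empty_of_forall_notMem fun z hz => ?_
    refine mem_iInter.1 hz (max (a - z) (z - b)) ⟨?_, ?_⟩
    · linarith [le_max_left (a - z) (z - b)]
    · linarith [le_max_right (a - z) (z - b)]
  rwa [hempty, measure_empty] at h

/-- A fixed point of the Bellman operator with bounded rewards has bounded support. -/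
theorem fixedPoint_compl_Icc_eq_zero (hP : ∀ x, IsProbabilityMeasure (P x)) (hγ0 : 0 ≤ γ)
    (hγ1 : γ < 1) {Rmin Rmax : ℝ}
    (hsupp : ∀ x, P x {p : ℝ × X | p.1 ∈ Set.Icc Rmin Rmax}ᶜ = 0)
    (hη : ∀ x, IsProbabilityMeasure (η x)) (hfix : bellman P γ η = η) {ε : ℝ} (hε : 0 < ε)
    (x : X) :
    η x (Icc (Rmin / (1 - γ) - ε) (Rmax / (1 - γ) + ε))ᶜ = 0 := by
  have hγ' : 1 - γ ≠ 0 := by linarith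
  set f : ℝ → ℝ≥0∞ := fun c =>
    ⨆ x', η x' (Icc (Rmin / (1 - γ) - c) (Rmax / (1 - γ) + c))ᶜ
  have hanti : Antitone f := fun c d hcd => iSup_mono fun x' =>
    measure_mono (compl_subset_compl.2 (Icc_subset_Icc (by linarith) (by linarith)))
  have hstep : ∀ c, f (γ * c) ≤ f c := by
    intro c
    refine iSup_le fun x' => ?_
    have h := bellman_compl_Icc_le hP hγ0 hsupp hη (Rmin / (1 - γ) - c) (Rmax / (1 - γ) + c) x'
    rw [hfix] at h
    have hlow : Rmin + γ * (Rmin / (1 - γ) - c) = Rmin / (1 - γ) - γ * c := by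
      field_simp
      ring
    have hup : Rmax + γ * (Rmax / (1 - γ) + c) = Rmax / (1 - γ) + γ * c := by
      field_simp
      ring
    rwa [hlow, hup] at h
  have hpow : ∀ (c : ℝ) (n : ℕ), f (γ ^ n * c) ≤ f c := by
    intro c n
    induction n with
    | zero => simp
    | succ n ih =>
      rw [pow_succ', mul_assoc]
      exact (hstep _).trans ih
  have hconst : ∀ c, f ε ≤ f c := by
    intro c
    have hlim : Filter.Tendsto (fun n : ℕ => γ ^ n * c) Filter.atTop (nhds 0) := by
      simpa using (tendsto_pow_atTop_nhds_zero_of_lt_one hγ0 hγ1).mul_const c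
    obtain ⟨n, hn⟩ := (hlim.eventually_lt_const hε).exists
    exact (hanti hn.le).trans (hpow c n)
  have hlim : Filter.Tendsto (fun c : ℝ => ∑ x',
      η x' (Icc (Rmin / (1 - γ) - c) (Rmax / (1 - γ) + c))ᶜ) Filter.atTop (nhds 0) := by
    have h := tendsto_finsetSum Finset.univ fun x' _ =>
      tendsto_measure_compl_Icc_atTop (η x') (Rmin / (1 - γ)) (Rmax / (1 - γ))
    simpa using h
  have hzero : f ε ≤ 0 := by
    refine ge_of_tendsto hlim (Filter.Eventually.of_forall fun c => (hconst c).trans ?_)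
    exact iSup_le fun x' => Finset.single_le_sum
      (f := fun x' => η x' (Icc (Rmin / (1 - γ) - c) (Rmax / (1 - γ) + c))ᶜ)
      (fun _ _ => zero_le) (Finset.mem_univ x')
  exact le_antisymm ((le_iSup (fun x' =>
    η x' (Icc (Rmin / (1 - γ) - ε) (Rmax / (1 - γ) + ε))ᶜ) x).trans hzero) zero_le

/-- The fixed point of the projected Bellman operator is supported on `[V_min, V_max]`. -/
theorem projected_fixedPoint_mem_Icc (hP : ∀ x, IsProbabilityMeasure (P x)) (hγ0 : 0 ≤ γ)
    (hγ1 : γ < 1) {Rmin Rmax : ℝ}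
    (hsupp : ∀ x, P x {p : ℝ × X | p.1 ∈ Set.Icc Rmin Rmax}ᶜ = 0)
    {m : ℕ} {lam : X → Fin m → ℝ} (hlam : lam ∈ unitCube X m) {θ : X → Fin m → ℝ}
    (hfix : projBellmanParam P γ lam θ = θ) (x : X) (i : Fin m) :
    θ x i ∈ Icc (Rmin / (1 - γ)) (Rmax / (1 - γ)) := by
  have hη : ∀ x, IsProbabilityMeasure (paramDist θ x) := fun x =>
    isProbabilityMeasure_paramDistOne i.pos (θ x)
  have : Nonempty (X × Fin m) := ⟨(x, i)⟩
  obtain ⟨p, hp⟩ := Finite.exists_min fun q : X × Fin m => θ q.1 q.2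
  obtain ⟨q, hq⟩ := Finite.exists_max fun q : X × Fin m => θ q.1 q.2
  set a := θ p.1 p.2
  set b := θ q.1 q.2
  have hbell : ∀ x, bellman P γ (paramDist θ) x (Icc (Rmin + γ * a) (Rmax + γ * b))ᶜ = 0 := by
    intro x
    refine le_antisymm ((bellman_compl_Icc_le hP hγ0 hsupp hη a b x).trans ?_) zero_le
    exact iSup_le fun x' => (paramDistOne_compl_Icc fun j => ⟨hp (x', j), hq (x', j)⟩).le
  have hmem : ∀ x j, θ x j ∈ Icc (Rmin + γ * a) (Rmax + γ * b) := by
    intro x j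
    have := isProbabilityMeasure_bellman (γ := γ) hP hη x
    rw [← hfix]
    exact ⟨(le_invCDF (hbell x) (qlevel_pos j) (qlevel_lt_one j)).trans
        (invCDF_le_projParam hlam _ x j),
      (projParam_le_upInvCDF hlam _ x j).trans
        (upInvCDF_le (hbell x) (qlevel_pos j) (qlevel_lt_one j))⟩
  have hpos : 0 < 1 - γ := by linarith
  have ha : Rmin / (1 - γ) ≤ a := by
    rw [div_le_iff₀ hpos]
    linarith [(hmem p.1 p.2).1]
  have hb : b ≤ Rmax / (1 - γ) := by
    rw [le_div_iff₀ hpos]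
    linarith [(hmem q.1 q.2).2]
  exact ⟨ha.trans (hp (x, i)), (hq (x, i)).trans hb⟩

end Bellman

/-- Approximation quality of QDP fixed points: if all reward distributions are
supported on `[R_min, R_max]`, then the fixed point `η̂^π_λ` of `Π^λ T^π` in `F_{Q,m}^X`
satisfies `w̄_1(η̂^π_λ, η^π) ≤ (V_max − V_min)/(2m(1−γ))`, stated coordinatewise over states
(which is equivalent to the bound on the max over states). -/
theorem qdp_fixed_point_quality
    {X : Type*} [Fintype X] [MeasurableSpace X] [MeasurableSingletonClass X]
    (P : X → Measure (ℝ × X)) (hP : ∀ x, IsProbabilityMeasure (P x))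
    (γ : ℝ) (hγ0 : 0 ≤ γ) (hγ1 : γ < 1)
    (Rmin Rmax : ℝ) (hR : Rmin ≤ Rmax)
    (hsupp : ∀ x, P x {p : ℝ × X | p.1 ∈ Set.Icc Rmin Rmax}ᶜ = 0)
    (ηπ : X → Measure ℝ) (hηπ : ∀ x, IsProbabilityMeasure (ηπ x))
    (hfix : bellman P γ ηπ = ηπ)
    (huniq : ∀ η : X → Measure ℝ, (∀ x, IsProbabilityMeasure (η x)) →
      bellman P γ η = η → η = ηπ)
    {m : ℕ} (hm : 0 < m) (lam : X → Fin m → ℝ) (hlam : lam ∈ unitCube X m)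
    (ηhat : X → Measure ℝ) (hhatFQ : ∀ x, ηhat x ∈ FQ m)
    (hhatfix : proj lam (bellman P γ ηhat) = ηhat) :
    ∀ x, w1 (ηhat x) (ηπ x)
      ≤ (Rmax / (1 - γ) - Rmin / (1 - γ)) / (2 * m * (1 - γ)) := by
  intro x
  have hpos : 0 < 1 - γ := by linarith
  have hm' : (0:ℝ) < m := by exact_mod_cast hm
  set Vmin := Rmin / (1 - γ) with hVmin
  set Vmax := Rmax / (1 - γ) with hVmax
  have hV : Vmin ≤ Vmax := div_le_div_of_nonneg_right hR hpos.le
  have hVmin' : Rmin + γ * Vmin = Vmin := by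
    rw [hVmin]
    field_simp
    ring
  have hVmax' : Rmax + γ * Vmax = Vmax := by
    rw [hVmax]
    field_simp
    ring
  set θ := projParam lam (bellman P γ ηhat)
  have hhat : paramDist θ = ηhat := hhatfix
  have hfixθ : projBellmanParam P γ lam θ = θ := by rw [projBellmanParam, hhat]
  have hηhat : ∀ x, IsProbabilityMeasure (ηhat x) := fun x => by
    rw [← hhat]
    exact isProbabilityMeasure_paramDistOne hm (θ x)
  have hhatsupp : ∀ x, ηhat x (Icc Vmin Vmax)ᶜ = 0 := fun x => by
    rw [← hhat]
    exact paramDistOne_compl_Icc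
      (projected_fixedPoint_mem_Icc hP hγ0 hγ1 hsupp hlam hfixθ x)
  have hbell := isProbabilityMeasure_bellman (γ := γ) hP hηhat
  have hbellsupp : ∀ x, bellman P γ ηhat x (Icc Vmin Vmax)ᶜ = 0 := fun x => by
    have h := bellman_compl_Icc_le hP hγ0 hsupp hηhat Vmin Vmax x
    rw [hVmin', hVmax'] at h
    simpa [hhatsupp] using h
  have hproj : ∀ x, cdfDist (ηhat x) (bellman P γ ηhat x) ≤
      ENNReal.ofReal (1 / (2 * m)) * ENNReal.ofReal (Vmax - Vmin) := fun x => by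
    refine cdfDist_le_of_support (hhatsupp x) (hbellsupp x) fun y => ?_
    have h := abs_cdf_paramDistOne_sub_le hm (invCDF_le_projParam hlam (bellman P γ ηhat) x)
      (projParam_le_upInvCDF hlam (bellman P γ ηhat) x) y
    have hx : paramDistOne (projParam lam (bellman P γ ηhat) x) = ηhat x := congrFun hhat x
    rwa [hx] at h
  have hfin : ∀ x, cdfDist (ηhat x) (ηπ x) ≤
      ENNReal.ofReal 1 * ENNReal.ofReal ((Vmax + 1) - (Vmin - 1)) := fun x => by
    refine cdfDist_le_of_support (measure_mono_null (compl_subset_compl.2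
      (Icc_subset_Icc (by linarith) (by linarith))) (hhatsupp x))
      (fixedPoint_compl_Icc_eq_zero hP hγ0 hγ1 hsupp hηπ hfix one_pos x) fun y => ?_
    rw [abs_le]
    constructor <;> linarith [cdf_nonneg (ηhat x) y, cdf_le_one (ηhat x) y,
      cdf_nonneg (ηπ x) y, cdf_le_one (ηπ x) y]
  set W := ⨆ x, cdfDist (ηhat x) (ηπ x)
  have hWtop : W ≠ ∞ := ne_top_of_le_ne_top
    (ENNReal.mul_ne_top ENNReal.ofReal_ne_top ENNReal.ofReal_ne_top) (iSup_le hfin)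
  have hWle : W ≤ ENNReal.ofReal (1 / (2 * m)) * ENNReal.ofReal (Vmax - Vmin) +
      ENNReal.ofReal γ * W := by
    refine iSup_le fun x => (cdfDist_triangle _ (bellman P γ ηhat x) _).trans
      (add_le_add (hproj x) ?_)
    have h := cdfDist_bellman_le hP hγ0 hηhat hηπ x
    rwa [hfix] at h
  have hxW : cdfDist (ηhat x) (ηπ x) ≤ W := le_iSup (fun x => cdfDist (ηhat x) (ηπ x)) x
  have hreal : W.toReal ≤ 1 / (2 * m) * (Vmax - Vmin) + γ * W.toReal := by
    have h := ENNReal.toReal_mono (ENNReal.add_ne_top.2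
      ⟨ENNReal.mul_ne_top ENNReal.ofReal_ne_top ENNReal.ofReal_ne_top,
        ENNReal.mul_ne_top ENNReal.ofReal_ne_top hWtop⟩) hWle
    rwa [ENNReal.toReal_add
      (ENNReal.mul_ne_top ENNReal.ofReal_ne_top ENNReal.ofReal_ne_top)
      (ENNReal.mul_ne_top ENNReal.ofReal_ne_top hWtop), ENNReal.toReal_mul, ENNReal.toReal_mul,
      ENNReal.toReal_ofReal (by positivity), ENNReal.toReal_ofReal (by linarith),
      ENNReal.toReal_ofReal hγ0] at h
  calc w1 (ηhat x) (ηπ x) ≤ (cdfDist (ηhat x) (ηπ x)).toReal :=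
        w1_le_toReal_cdfDist (ne_top_of_le_ne_top hWtop hxW)
    _ ≤ W.toReal := ENNReal.toReal_mono hWtop hxW
    _ ≤ (1 / (2 * m) * (Vmax - Vmin)) / (1 - γ) := by
        rw [le_div_iff₀ hpos]
        linarith
    _ = (Vmax - Vmin) / (2 * m * (1 - γ)) := by
        field_simp
end
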